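/- arXiv:1409.2333 — 6 statements merged into one kernel-verified Lean document; each statement's English description precedes it below -/
import Mathlib

section
/- Let n be an odd positive integer. There exist an open interval I_{π/4} containing π/4 and an open interval I_{3π/4} containing 3π/4 such that for every θ ∈ (I_{π/4} ∪ I_{3π/4}) \ {π/4, 3π/4}, the nodal set N(Φ^θ_n) is nonempty and connected, the gradient of Φ^θ_n vanishes nowhere on N(Φ^θ_n) (so the nodal set is a regular simple curve), and ℝ² \ N(Φ^θ_n) has exactly two connected components, i.e. Φ^θ_n has exactly two nodal domains. -/
/-- The physicist's Hermite polynomials: `H 0 = 1`, `H 1 = 2X`,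
`H (n+2) = 2X · H (n+1) - 2(n+1) · H n`. -/
noncomputable def H : ℕ → Polynomial ℝ
  | 0 => 1
  | 1 => Polynomial.C 2 * Polynomial.X
  | n + 2 => Polynomial.C 2 * Polynomial.X * H (n + 1) - Polynomial.C (2 * (n + 1) : ℝ) * H n

/-- The eigenfunction `Φ^θ_n(x,y) = (cos θ · H_n(x) + sin θ · H_n(y)) e^{-(x²+y²)/2}`. -/
noncomputable def Phi (n : ℕ) (θ : ℝ) : ℝ × ℝ → ℝ := fun p =>
  (Real.cos θ * (H n).eval p.1 + Real.sin θ * (H n).eval p.2) *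
    Real.exp (-(p.1 ^ 2 + p.2 ^ 2) / 2)

/-- The nodal set of `Φ^θ_n`. -/
noncomputable def nodalSet (n : ℕ) (θ : ℝ) : Set (ℝ × ℝ) := {p | Phi n θ p = 0}

/-- The number of nodal domains: the number of connected components of the
complement of the nodal set. -/
noncomputable def numNodalDomains (n : ℕ) (θ : ℝ) : ℕ :=
  {C : Set (ℝ × ℝ) | ∃ p, Phi n θ p ≠ 0 ∧
    C = connectedComponentIn {q : ℝ × ℝ | Phi n θ q ≠ 0} p}.ncard

section
open Set Filter Topology

theorem int_const {S : Set (ℝ × ℝ)} (hS : IsPreconnected S) {u : ℝ × ℝ → ℝ} (hu : Continuous u)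
    (hZ : ∀ p ∈ S, ∃ k : ℤ, (k : ℝ) = u p) {p q : ℝ × ℝ} (hp : p ∈ S) (hq : q ∈ S) : u p = u q := by
  have key : ∀ p ∈ S, ∀ q ∈ S, ¬ u p < u q := by
    intro p hp q hq hlt
    have hoc := (hS.image u hu.continuousOn).ordConnected
    obtain ⟨k, hk⟩ := hZ p hp
    obtain ⟨l, hl⟩ := hZ q hq
    have hkl : k < l := by
      have : (k : ℝ) < l := by rw [hk, hl]; exact hlt
      exact_mod_cast this
    have hkl' : (k : ℝ) + 1 ≤ l := by exact_mod_cast hkl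
    have hmem : (k : ℝ) + 1/2 ∈ u '' S :=
      hoc.out (mem_image_of_mem u hp) (mem_image_of_mem u hq) ⟨by linarith, by linarith⟩
    obtain ⟨r, hr, hrk⟩ := hmem
    obtain ⟨j, hj⟩ := hZ r hr
    have h2 : (2 * j : ℝ) = 2 * k + 1 := by rw [hj, hrk]; ring
    have h3 : 2 * j = 2 * k + 1 := by exact_mod_cast h2
    omega
  exact le_antisymm (not_lt.1 (key q hq p hp)) (not_lt.1 (key p hp q hq))

theorem unicoherent_plane {A B : Set (ℝ × ℝ)} (hA : IsClosed A) (hB : IsClosed B)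
    (hAc : IsPreconnected A) (hBc : IsPreconnected B) (hAB : A ∪ B = univ) :
    IsPreconnected (A ∩ B) := by
  classical
  rw [isPreconnected_closed_iff]
  intro t t' ht ht' hsub hP hQ
  by_contra hne
  have hdis : Disjoint (A ∩ B ∩ t) (A ∩ B ∩ t') := by
    rw [Set.disjoint_left]
    intro x hx hx'
    exact hne ⟨x, hx.1, hx.2, hx'.2⟩
  obtain ⟨g, hg0, hg1, -⟩ := exists_continuous_zero_one_of_isClosed
    ((hA.inter hB).inter ht) ((hA.inter hB).inter ht') hdis
  have hcoe : Continuous ((↑) : ℝ → AddCircle (1:ℝ)) := continuous_quotient_mk'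
  let f : ℝ × ℝ → AddCircle (1:ℝ) := fun p => if p ∈ A then ((g p / 2 : ℝ) : AddCircle (1:ℝ)) else ((-(g p / 2) : ℝ) : AddCircle (1:ℝ))
  have hfA : ∀ p ∈ A, f p = ((g p / 2 : ℝ) : AddCircle (1:ℝ)) := fun p hp => if_pos hp
  have hfB : ∀ p ∈ B, f p = ((-(g p / 2) : ℝ) : AddCircle (1:ℝ)) := by
    intro p hp
    by_cases hpA : p ∈ A
    · rw [hfA p hpA]
      rcases hsub ⟨hpA, hp⟩ with h | h
      · have : g p = 0 := hg0 ⟨⟨hpA, hp⟩, h⟩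
        rw [this]; simp
      · have : g p = 1 := hg1 ⟨⟨hpA, hp⟩, h⟩
        rw [this, QuotientAddGroup.eq]
        rw [AddSubgroup.mem_zmultiples_iff]
        exact ⟨-1, by norm_num⟩
    · exact if_neg hpA
  have hgc : Continuous g := g.continuous
  have hfc : Continuous f := by
    have h1 : ContinuousOn f A :=
      (hcoe.comp (hgc.div_const 2)).continuousOn.congr hfA
    have h2 : ContinuousOn f B :=
      (hcoe.comp (hgc.div_const 2).neg).continuousOn.congr hfB
    rw [← continuousOn_univ, ← hAB]
    exact h1.union_of_isClosed h2 hA hB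
  obtain ⟨p, hp⟩ := hP
  obtain ⟨q, hq⟩ := hQ
  have gp : g p = 0 := hg0 hp
  have gq : g q = 1 := hg1 hq
  have cov := AddCircle.isCoveringMap_coe (1:ℝ)
  obtain ⟨e₀, he₀⟩ := QuotientAddGroup.mk_surjective (f p)
  obtain ⟨F, ⟨hF0, hF⟩, -⟩ := cov.existsUnique_continuousMap_lifts ⟨f, hfc⟩ p e₀ he₀
  have hF' : ∀ x, ((F x : ℝ) : AddCircle (1:ℝ)) = f x := fun x => congrFun hF x
  have hFc : Continuous F := F.continuous
  have e1 : F p - g p / 2 = F q - g q / 2 := by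
    refine int_const (u := fun x => F x - g x / 2) hAc (by fun_prop) ?_ hp.1.1 hq.1.1
    intro x hx
    have := (hF' x).trans (hfA x hx)
    rw [eq_comm, QuotientAddGroup.eq, AddSubgroup.mem_zmultiples_iff] at this
    obtain ⟨k, hk⟩ := this
    exact ⟨k, by simp at hk; linarith⟩
  have e2 : F p + g p / 2 = F q + g q / 2 := by
    refine int_const (u := fun x => F x + g x / 2) hBc (by fun_prop) ?_ hp.1.2 hq.1.2
    intro x hx
    have := (hF' x).trans (hfB x hx)
    rw [eq_comm, QuotientAddGroup.eq, AddSubgroup.mem_zmultiples_iff] at this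
    obtain ⟨k, hk⟩ := this
    exact ⟨k, by simp at hk; linarith⟩
  rw [gp, gq] at e1 e2
  linarith

theorem nodal_abstract (Φ : ℝ × ℝ → ℝ) (hc : Continuous Φ)
    (hpos : IsPathConnected {p | 0 < Φ p}) (hneg : IsPathConnected {p | Φ p < 0})
    (hne : ∃ p, Φ p = 0) (hreg : ∀ p, Φ p = 0 → fderiv ℝ Φ p ≠ 0) :
    IsConnected {p | Φ p = 0} ∧
    {C : Set (ℝ × ℝ) | ∃ p, Φ p ≠ 0 ∧
      C = connectedComponentIn {q : ℝ × ℝ | Φ q ≠ 0} p}.ncard = 2 := by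
  constructor
  · refine ⟨hne, ?_⟩
    have hA : {p | 0 ≤ Φ p} = closure {p | 0 < Φ p} := by
      apply Subset.antisymm
      · intro p hp
        rcases lt_or_eq_of_le (show 0 ≤ Φ p from hp) with h | h
        · exact subset_closure h
        · rw [mem_closure_iff_frequently]
          intro hev
          refine hreg p h.symm (IsLocalMax.fderiv_eq_zero ?_)
          filter_upwards [hev] with q hq
          rw [← h]; exact not_lt.1 hq
      · exact closure_minimal (fun p hp => show 0 ≤ Φ p from le_of_lt (show 0 < Φ p from hp)) (isClosed_le continuous_const hc)
    have hB : {p | Φ p ≤ 0} = closure {p | Φ p < 0} := by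
      apply Subset.antisymm
      · intro p hp
        rcases lt_or_eq_of_le (show Φ p ≤ 0 from hp) with h | h
        · exact subset_closure h
        · rw [mem_closure_iff_frequently]
          intro hev
          refine hreg p h (IsLocalMin.fderiv_eq_zero ?_)
          filter_upwards [hev] with q hq
          rw [h]; exact not_lt.1 hq
      · exact closure_minimal (fun p hp => show Φ p ≤ 0 from le_of_lt (show Φ p < 0 from hp)) (isClosed_le hc continuous_const)
    have := unicoherent_plane (A := {p | 0 ≤ Φ p}) (B := {p | Φ p ≤ 0})
      (isClosed_le continuous_const hc) (isClosed_le hc continuous_const)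
      (by rw [hA]; exact hpos.isConnected.isPreconnected.closure)
      (by rw [hB]; exact hneg.isConnected.isPreconnected.closure)
      (by ext p; simp [le_total])
    convert this using 1
    ext p
    simp only [mem_ofPred_eq, mem_inter_iff]
    constructor
    · intro h; rw [h]; simp
    · rintro ⟨h1, h2⟩; exact le_antisymm h2 h1
  · have hP : ∀ p, 0 < Φ p → connectedComponentIn {q : ℝ × ℝ | Φ q ≠ 0} p = {q | 0 < Φ q} := by
      intro p hp
      apply Subset.antisymm
      · intro q hq
        by_contra hq'
        have hoc := (isPreconnected_connectedComponentIn.image Φ hc.continuousOn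
          (s := connectedComponentIn {q : ℝ × ℝ | Φ q ≠ 0} p)).ordConnected
        have := hoc.out (mem_image_of_mem Φ hq)
          (mem_image_of_mem Φ (mem_connectedComponentIn (ne_of_gt hp)))
          (show (0:ℝ) ∈ Icc _ _ from ⟨not_lt.1 hq', hp.le⟩)
        obtain ⟨r, hr, hr0⟩ := this
        exact connectedComponentIn_subset _ _ hr hr0
      · exact hpos.isConnected.isPreconnected.subset_connectedComponentIn hp
          (fun q hq => ne_of_gt hq)
    have hN : ∀ p, Φ p < 0 → connectedComponentIn {q : ℝ × ℝ | Φ q ≠ 0} p = {q | Φ q < 0} := by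
      intro p hp
      apply Subset.antisymm
      · intro q hq
        by_contra hq'
        have hoc := (isPreconnected_connectedComponentIn.image Φ hc.continuousOn
          (s := connectedComponentIn {q : ℝ × ℝ | Φ q ≠ 0} p)).ordConnected
        have := hoc.out 
          (mem_image_of_mem Φ (mem_connectedComponentIn (ne_of_lt hp))) (mem_image_of_mem Φ hq)
          (show (0:ℝ) ∈ Icc _ _ from ⟨hp.le, not_lt.1 hq'⟩)
        obtain ⟨r, hr, hr0⟩ := this
        exact connectedComponentIn_subset _ _ hr hr0
      · exact hneg.isConnected.isPreconnected.subset_connectedComponentIn hp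
          (fun q hq => ne_of_lt hq)
    obtain ⟨a, ha⟩ := hpos.nonempty
    obtain ⟨b, hb⟩ := hneg.nonempty
    have : {C : Set (ℝ × ℝ) | ∃ p, Φ p ≠ 0 ∧
      C = connectedComponentIn {q : ℝ × ℝ | Φ q ≠ 0} p} = {{q | 0 < Φ q}, {q | Φ q < 0}} := by
      ext C
      simp only [mem_ofPred_eq, mem_insert_iff, mem_singleton_iff]
      constructor
      · rintro ⟨p, hp, rfl⟩
        rcases lt_or_gt_of_ne hp with h | h
        · right; exact hN p h
        · left; exact hP p h
      · rintro (rfl | rfl)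
        · exact ⟨a, ne_of_gt ha, (hP a ha).symm⟩
        · exact ⟨b, ne_of_lt hb, (hN b hb).symm⟩
    rw [this, Set.ncard_pair]
    intro h
    have : a ∈ {q | Φ q < 0} := h ▸ ha
    exact lt_asymm (show 0 < Φ a from ha) (show Φ a < 0 from this)

theorem climb_gen (g g' : ℝ → ℝ) (hg : ∀ x, HasDerivAt g (g' x) x) (hc : Continuous g') (z : ℝ)
    (hz : ∀ᶠ t in 𝓝[>] z, 0 < g' t) :
    (∃ y, z < y ∧ g' y = 0 ∧ ∀ t ∈ Ioc z y, g z < g t) ∨ (∀ t, z < t → g z < g t) := by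
  obtain ⟨w, hzw, hw⟩ := mem_nhdsGT_iff_exists_Ioo_subset.1 hz
  have hzw' : z < w := hzw
  have hgc : Continuous g := continuous_iff_continuousAt.2 fun x => (hg x).continuousAt
  set d := (z + w) / 2 with hd
  have hdz : z < d := by rw [hd]; linarith
  have hdw : d < w := by rw [hd]; linarith
  have hdp : 0 < g' d := hw ⟨hdz, hdw⟩
  -- positivity propagates
  have prop : ∀ b, (∀ t, z < t → t < b → g' t ≠ 0) → ∀ t, z < t → t < b → 0 < g' t := by
    intro b hb t htz htb
    by_contra hneg
    have hneg := not_lt.1 hneg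
    have hdt : d < t := by
      by_contra h
      exact absurd (hw ⟨htz, lt_of_le_of_lt (not_lt.1 h) hdw⟩) (not_lt.2 hneg)
    obtain ⟨s, hs, hs0⟩ := intermediate_value_Icc' hdt.le hc.continuousOn ⟨hneg, hdp.le⟩
    exact hb s (lt_of_lt_of_le hdz hs.1) (lt_of_le_of_lt hs.2 htb) hs0
  have mono : ∀ b, (∀ t, z < t → t < b → g' t ≠ 0) → ∀ t ∈ Ioc z b, g z < g t := by
    intro b hb t ht
    have hs : StrictMonoOn g (Icc z b) := by
      apply strictMonoOn_of_deriv_pos (convex_Icc z b) hgc.continuousOn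
      intro x hx
      rw [interior_Icc] at hx
      rw [(hg x).deriv]
      exact prop b hb x hx.1 hx.2
    exact hs ⟨le_rfl, ht.1.le.trans ht.2⟩ ⟨ht.1.le, ht.2⟩ ht.1
  by_cases hex : ∃ c, z < c ∧ g' c = 0
  · left
    obtain ⟨c, hzc, hc0⟩ := hex
    have hwle : ∀ c, z < c → g' c = 0 → w ≤ c := by
      intro c h1 h2
      by_contra h
      have h3 : 0 < g' c := hw ⟨h1, not_le.1 h⟩
      linarith
    let K : Set ℝ := Ici w ∩ g' ⁻¹' {0}
    have hK : IsClosed K := isClosed_Ici.inter (isClosed_singleton.preimage hc)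
    have hKb : BddBelow K := ⟨w, fun x hx => hx.1⟩
    have hmem : sInf K ∈ K := hK.csInf_mem ⟨c, hwle c hzc hc0, hc0⟩ hKb
    refine ⟨sInf K, lt_of_lt_of_le hzw' hmem.1, hmem.2, mono _ ?_⟩
    intro t ht htb h0
    exact absurd (csInf_le hKb (show t ∈ K from ⟨hwle t ht h0, h0⟩)) (not_le.2 htb)
  · right
    intro t ht
    exact mono t (fun s hs _ h0 => hex ⟨s, hs, h0⟩) t ⟨ht, le_rfl⟩

/-- abstract properties of odd Hermite functions -/
structure OscData (h h' : ℝ → ℝ) (N : ℝ) : Prop where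
  Npos : 0 < N
  hd : ∀ x, HasDerivAt h (h' x) x
  hd2 : ∀ x, HasDerivAt h' (2 * x * h' x - 2 * N * h x) x
  odd : ∀ x, h (-x) = - h x
  top : Tendsto h atTop atTop
  fin : {x | h' x = 0}.Finite
  nz : ∀ x, h' x = 0 → h x ≠ 0

namespace OscData
variable {h h' : ℝ → ℝ} {N : ℝ}

theorem cont (D : OscData h h' N) : Continuous h :=
  continuous_iff_continuousAt.2 fun x => (D.hd x).continuousAt

theorem cont' (D : OscData h h' N) : Continuous h' :=
  continuous_iff_continuousAt.2 fun x => (D.hd2 x).continuousAt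

theorem even' (D : OscData h h' N) (x : ℝ) : h' (-x) = h' x := by
  have h1 : HasDerivAt (fun y => h (-y)) (-(h' (-x))) x := by
    have := HasDerivAt.comp x (D.hd (-x)) (hasDerivAt_neg x)
    rw [mul_neg, mul_one] at this
    exact this
  have h2 : HasDerivAt (fun y => h (-y)) (-(h' x)) x := by
    have : (fun y => h (-y)) = fun y => - h y := funext D.odd
    rw [this]; exact (D.hd x).neg
  have := h1.unique h2
  linarith

theorem bot (D : OscData h h' N) : Tendsto h atBot atBot := by
  have : h = fun x => - h (-x) := by funext x; rw [D.odd]; ring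
  rw [this]
  exact tendsto_neg_atTop_atBot.comp (D.top.comp tendsto_neg_atBot_atTop)

theorem pos_right (D : OscData h h' N) (z : ℝ) (hz : 0 < h' z ∨ (h' z = 0 ∧ h z < 0)) :
    ∀ᶠ t in 𝓝[>] z, 0 < h' t := by
  rcases hz with hz | ⟨h0, hz⟩
  · exact (D.cont'.continuousAt.eventually (lt_mem_nhds hz)).filter_mono nhdsWithin_le_nhds
  · have hp : deriv h' z > 0 := by
      rw [(D.hd2 z).deriv, h0]
      have := mul_pos D.Npos (neg_pos.2 hz)
      nlinarith
    have := eventually_nhdsWithin_sign_eq_of_deriv_pos hp h0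
    filter_upwards [this.filter_mono nhdsWithin_le_nhds, self_mem_nhdsWithin] with t ht htz
    rw [sign_pos (sub_pos.2 htz)] at ht
    exact sign_eq_one_iff.1 ht

theorem climb_right (D : OscData h h' N) (z : ℝ) (hz : 0 < h' z ∨ (h' z = 0 ∧ h z < 0)) :
    (∃ y, z < y ∧ h' y = 0 ∧ ∀ t ∈ Ioc z y, h z < h t) ∨ (∀ t, z < t → h z < h t) :=
  climb_gen h h' D.hd D.cont' z (D.pos_right z hz)

theorem climb_left (D : OscData h h' N) (z : ℝ) (hz : h' z < 0 ∨ (h' z = 0 ∧ h z < 0)) :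
    ∃ y, y < z ∧ h' y = 0 ∧ ∀ t ∈ Ico y z, h z < h t := by
  have hg : ∀ x, HasDerivAt (fun t => h (-t)) (-(h' (-x))) x := by
    intro x
    have := HasDerivAt.comp x (D.hd (-x)) (hasDerivAt_neg x)
    rw [mul_neg, mul_one] at this
    exact this
  have hev : ∀ᶠ t in 𝓝[>] (-z), 0 < -(h' (-t)) := by
    rcases hz with hz | ⟨h0, hz⟩
    · have hcc : Continuous fun t => -(h' (-t)) := (D.cont'.comp continuous_neg).neg
      exact (hcc.continuousAt.eventually (lt_mem_nhds (by simpa using hz))).filter_mono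
        nhdsWithin_le_nhds
    · have hp : deriv h' z > 0 := by
        rw [(D.hd2 z).deriv, h0]
        have := mul_pos D.Npos (neg_pos.2 hz)
        nlinarith
      have := eventually_nhdsWithin_sign_eq_of_deriv_pos hp h0
      have ht : Tendsto (fun t : ℝ => -t) (𝓝 (-z)) (𝓝 z) := by
        simpa using (continuous_neg (G := ℝ)).tendsto (-z)
      filter_upwards [(ht.eventually this).filter_mono nhdsWithin_le_nhds, self_mem_nhdsWithin]
        with t ht htz
      have htz' : -z < t := htz
      rw [sign_neg (show -t - z < 0 by linarith)] at ht
      have := sign_eq_neg_one_iff.1 ht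
      linarith
  rcases climb_gen _ _ hg ((D.cont'.comp continuous_neg).neg) (-z) hev with ⟨y, h1, h2, h3⟩ | hall
  · refine ⟨-y, by linarith, by linarith, ?_⟩
    intro t ht
    have := h3 (-t) ⟨by linarith [ht.2], by linarith [ht.1]⟩
    simpa using this
  · exfalso
    obtain ⟨t, ht1, ht2⟩ := ((D.bot.eventually (eventually_le_atBot (h z))).and
      (eventually_lt_atBot z)).exists
    have := hall (-t) (by linarith)
    simp at this
    linarith

theorem climb (D : OscData h h' N) (z : ℝ) (hz : h' z ≠ 0 ∨ h z < 0) :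
    (∃ y, h' y = 0 ∧ h z < h y ∧ ∀ t ∈ uIcc z y, h z ≤ h t) ∨ (∀ t, z ≤ t → h z ≤ h t) := by
  by_cases hc : 0 < h' z ∨ (h' z = 0 ∧ h z < 0)
  · rcases D.climb_right z hc with ⟨y, h1, h2, h3⟩ | hall
    · left
      refine ⟨y, h2, h3 y ⟨h1, le_rfl⟩, ?_⟩
      intro t ht
      rw [uIcc_of_le h1.le] at ht
      rcases ht.1.eq_or_lt with rfl | hl
      · exact le_rfl
      · exact (h3 t ⟨hl, ht.2⟩).le
    · right
      intro t ht
      rcases ht.eq_or_lt with rfl | hl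
      · exact le_rfl
      · exact (hall t hl).le
  · left
    have hc' : h' z < 0 := by
      push Not at hc
      rcases hz with hz | hz
      · exact lt_of_le_of_ne hc.1 hz
      · rcases hc.1.lt_or_eq with h | h
        · exact h
        · exact absurd hz (not_lt.2 (hc.2 h))
    obtain ⟨y, h1, h2, h3⟩ := D.climb_left z (Or.inl hc')
    refine ⟨y, h2, h3 y ⟨le_rfl, h1⟩, ?_⟩
    intro t ht
    rw [uIcc_of_ge h1.le] at ht
    rcases ht.2.eq_or_lt with rfl | hl
    · exact le_rfl
    · exact (h3 t ⟨ht.1, hl⟩).le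

theorem climb_out (D : OscData h h' N) (z : ℝ) (h0 : h' z = 0) (hz : h z < 0) :
    (∃ y, |z| < |y| ∧ h' y = 0 ∧ h z < h y ∧ ∀ t ∈ uIcc z y, h z ≤ h t) ∨
      (∀ t, z ≤ t → h z ≤ h t) := by
  rcases le_or_gt 0 z with hz0 | hz0
  · rcases D.climb_right z (Or.inr ⟨h0, hz⟩) with ⟨y, h1, h2, h3⟩ | hall
    · left
      refine ⟨y, by rw [abs_of_nonneg hz0]; exact h1.trans_le (le_abs_self y),
        h2, h3 y ⟨h1, le_rfl⟩, ?_⟩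
      intro t ht
      rw [uIcc_of_le h1.le] at ht
      rcases ht.1.eq_or_lt with rfl | hl
      · exact le_rfl
      · exact (h3 t ⟨hl, ht.2⟩).le
    · right
      intro t ht
      rcases ht.eq_or_lt with rfl | hl
      · exact le_rfl
      · exact (hall t hl).le
  · left
    obtain ⟨y, h1, h2, h3⟩ := D.climb_left z (Or.inr ⟨h0, hz⟩)
    refine ⟨y, by rw [abs_of_neg hz0, abs_of_neg (h1.trans hz0)]; linarith, h2,
      h3 y ⟨le_rfl, h1⟩, ?_⟩
    intro t ht
    rw [uIcc_of_ge h1.le] at ht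
    rcases ht.2.eq_or_lt with rfl | hl
    · exact le_rfl
    · exact (h3 t ⟨ht.1, hl⟩).le

/-- energy monotonicity on the half-line -/
theorem energy (D : OscData h h' N) : MonotoneOn (fun t => h t ^ 2 + h' t ^ 2 / (2 * N)) (Ici 0) ∧
    ∀ s t, 0 ≤ s → s < t → h s ^ 2 + h' s ^ 2 / (2 * N) < h t ^ 2 + h' t ^ 2 / (2 * N) := by
  have hN := D.Npos
  have hE : ∀ t, HasDerivAt (fun t => h t ^ 2 + h' t ^ 2 / (2 * N)) (2 * t * h' t ^ 2 / N) t := by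
    intro t
    have := ((D.hd t).pow 2).add (((D.hd2 t).pow 2).div_const (2 * N))
    have e : 2 * t * h' t ^ 2 / N = ((2 : ℕ) : ℝ) * h t ^ (2 - 1) * h' t +
        ((2 : ℕ) : ℝ) * h' t ^ (2 - 1) * (2 * t * h' t - 2 * N * h t) / (2 * N) := by
      push_cast
      field_simp
      ring
    rw [e]
    exact this
  have hcE : Continuous (fun t => h t ^ 2 + h' t ^ 2 / (2 * N)) :=
    continuous_iff_continuousAt.2 fun x => (hE x).continuousAt
  have hm : MonotoneOn (fun t => h t ^ 2 + h' t ^ 2 / (2 * N)) (Ici 0) := by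
    apply monotoneOn_of_deriv_nonneg (convex_Ici 0) hcE.continuousOn
    · exact fun x _ => (hE x).differentiableAt.differentiableWithinAt
    · intro x hx
      rw [interior_Ici] at hx
      have hx' : (0:ℝ) < x := hx
      rw [(hE x).deriv]
      positivity
  refine ⟨hm, ?_⟩
  intro s t hs hst
  have hle := hm (show s ∈ Ici 0 from hs) (show t ∈ Ici 0 from hs.trans hst.le) hst.le
  refine lt_of_le_of_ne hle ?_
  intro heq
  have hsub : Ioo s t ⊆ {x | h' x = 0} := by
    intro x hx
    have hx0 : 0 < x := hs.trans_lt hx.1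
    have hev : (fun t => h t ^ 2 + h' t ^ 2 / (2 * N)) =ᶠ[𝓝 x]
        fun _ => h s ^ 2 + h' s ^ 2 / (2 * N) := by
      filter_upwards [Ioo_mem_nhds hx.1 hx.2] with r hr
      have hr0 : 0 ≤ r := hs.trans hr.1.le
      have a1 := hm (show s ∈ Ici 0 from hs) (show r ∈ Ici 0 from hr0) hr.1.le
      have a2 := hm (show r ∈ Ici 0 from hr0) (show t ∈ Ici 0 from hs.trans hst.le) hr.2.le
      simp only at a1 a2
      linarith
    have := (hE x).unique ((hasDerivAt_const x _).congr_of_eventuallyEq hev)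
    have h3 : 2 * x * h' x ^ 2 = 0 := by
      rcases div_eq_zero_iff.1 this with h | h
      · exact h
      · exact absurd h hN.ne'
    have h4 : h' x ^ 2 = 0 := by
      rcases mul_eq_zero.1 h3 with h | h
      · exact absurd h (by positivity)
      · exact h
    exact pow_eq_zero_iff (two_ne_zero) |>.1 h4
  exact (Ioo_infinite hst) (D.fin.subset hsub)

theorem energy_abs (D : OscData h h' N) (t : ℝ) :
    h |t| ^ 2 + h' |t| ^ 2 / (2 * N) = h t ^ 2 + h' t ^ 2 / (2 * N) := by
  rcases abs_choice t with h | h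
  · rw [h]
  · rw [h, D.odd, D.even']; ring

theorem amp_le (D : OscData h h' N) {t y : ℝ} (hy : h' y = 0) (hty : |t| ≤ |y|) :
    |h t| ≤ |h y| := by
  have hN := D.Npos
  have := D.energy.1 (show |t| ∈ Ici 0 from abs_nonneg t) (show |y| ∈ Ici 0 from abs_nonneg y) hty
  simp only [D.energy_abs] at this
  rw [hy] at this
  apply sq_le_sq.1
  have : 0 ≤ h' t ^ 2 / (2 * N) := by positivity
  simp at *
  linarith

theorem amp_lt (D : OscData h h' N) {t y : ℝ} (ht : h' t = 0) (hy : h' y = 0) (hty : |t| < |y|) :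
    |h t| < |h y| := by
  have := D.energy.2 |t| |y| (abs_nonneg t) hty
  rw [D.energy_abs, D.energy_abs, ht, hy] at this
  apply sq_lt_sq.1
  simpa using this


theorem core (D : OscData h h' N) {m : ℝ} (hm : 1 < m)
    (hgood : ∀ c d, h' c = 0 → h' d = 0 → |h c| < |h d| → m * |h c| < |h d|)
    {p : ℝ × ℝ} (hp : m * h p.1 < h p.2) :
    ∃ x y, JoinedIn {q : ℝ × ℝ | m * h q.1 < h q.2} p (x, y) ∧ ∀ t, y ≤ t → m * h x < h t := by
  by_contra hno
  set U : Set (ℝ × ℝ) := {q : ℝ × ℝ | m * h q.1 < h q.2} with hU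
  have inU : ∀ {x y}, JoinedIn U p (x, y) → m * h x < h y := fun hj => hj.target_mem
  have moveY : ∀ x y y', JoinedIn U p (x, y) → (∀ t ∈ uIcc y y', m * h x < h t) →
      JoinedIn U p (x, y') := by
    intro x y y' hj ht
    refine hj.trans (JoinedIn.of_segment_subset ?_)
    rw [← Prod.image_mk_segment_right]
    rintro _ ⟨t, hts, rfl⟩
    rw [segment_eq_uIcc] at hts
    exact ht t hts
  have moveX : ∀ x x' y, JoinedIn U p (x, y) → (∀ t ∈ uIcc x x', m * h t < h y) →
      JoinedIn U p (x', y) := by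
    intro x x' y hj ht
    refine hj.trans (JoinedIn.of_segment_subset ?_)
    rw [← Prod.image_mk_segment_left]
    rintro _ ⟨t, hts, rfl⟩
    rw [segment_eq_uIcc] at hts
    exact ht t hts
  have m0 : 0 < m := by linarith
  have stepY : ∀ x y, JoinedIn U p (x, y) → (h' y ≠ 0 ∨ h y < 0) →
      ∃ y', h' y' = 0 ∧ h y < h y' ∧ JoinedIn U p (x, y') := by
    intro x y hj hy
    rcases D.climb y hy with ⟨y', h1, h2, h3⟩ | hall
    · exact ⟨y', h1, h2, moveY x y y' hj fun t ht => (inU hj).trans_le (h3 t ht)⟩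
    · exact absurd ⟨x, y, hj, fun t ht => (inU hj).trans_le (hall t ht)⟩ hno
  have stepX : ∀ x y, JoinedIn U p (x, y) → (h' x ≠ 0 ∨ 0 < h x) →
      ∃ x', h' x' = 0 ∧ h x' < h x ∧ JoinedIn U p (x', y) := by
    intro x y hj hx
    have hx' : h' (-x) ≠ 0 ∨ h (-x) < 0 := by
      rw [D.even', D.odd]
      rcases hx with hx | hx
      · left; exact hx
      · right; linarith
    rcases D.climb (-x) hx' with ⟨u, h1, h2, h3⟩ | hall
    · refine ⟨-u, by rw [D.even', h1], by rw [D.odd] at h2 ⊢; linarith, moveX x (-u) y hj ?_⟩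
      intro t ht
      have ht' : -t ∈ uIcc (-x) u := by
        rw [mem_uIcc] at ht ⊢
        rcases ht with ⟨a, b⟩ | ⟨a, b⟩
        · right; constructor <;> linarith
        · left; constructor <;> linarith
      have := h3 _ ht'
      rw [D.odd, D.odd] at this
      have h5 : m * h t ≤ m * h x := mul_le_mul_of_nonneg_left (by linarith) m0.le
      exact h5.trans_lt (inU hj)
    · exfalso
      obtain ⟨Y, hY⟩ := eventually_atTop.1 (D.top.eventually (eventually_ge_atTop 0))
      obtain ⟨t0, -, ht0⟩ := (isCompact_uIcc (a := y) (b := Y)).exists_isMinOn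
        ⟨y, left_mem_uIcc⟩ D.cont.continuousOn
      obtain ⟨x', hx1, hx2⟩ := ((D.bot.eventually
        (eventually_lt_atBot (min 0 (h t0 / m)))).and (eventually_le_atBot x)).exists
      apply hno
      have hlow : m * h x' < min 0 (h t0) := by
        have a1 := hx1.trans_le (min_le_left _ _)
        have a2 := hx1.trans_le (min_le_right _ _)
        rw [lt_div_iff₀ m0] at a2
        refine lt_min (by nlinarith) (by linarith)
      refine ⟨x', y, moveX x x' y hj ?_, ?_⟩
      · intro t ht
        rw [uIcc_of_ge hx2] at ht
        have := hall (-t) (by linarith [ht.2])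
        rw [D.odd, D.odd] at this
        have h5 : m * h t ≤ m * h x := mul_le_mul_of_nonneg_left (by linarith) m0.le
        exact h5.trans_lt (inU hj)
      · intro t ht
        rcases le_total t Y with h6 | h6
        · have : t ∈ uIcc y Y := by rw [uIcc_of_le (ht.trans h6)]; exact ⟨ht, h6⟩
          exact (hlow.trans_le (min_le_right _ _)).trans_le (ht0 this)
        · exact (hlow.trans_le (min_le_left _ _)).trans_le (hY t h6)
  -- argmax in y
  have hp0 : JoinedIn U p (p.1, p.2) := JoinedIn.refl hp
  have hSne : {y | h' y = 0 ∧ ∃ x, JoinedIn U p (x, y)}.Nonempty := by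
    by_cases hc : h' p.2 = 0
    · exact ⟨p.2, hc, p.1, hp0⟩
    · obtain ⟨y', a, -, b⟩ := stepY _ _ hp0 (Or.inl hc)
      exact ⟨y', a, _, b⟩
  obtain ⟨y, ⟨hy0, x₀, hj₀⟩, hymax⟩ := Set.exists_max_image _ h
    (D.fin.subset fun y hy => hy.1) hSne
  have hmax : ∀ x' y', JoinedIn U p (x', y') → h y' ≤ h y := by
    intro x' y' hj
    by_cases hc : h' y' = 0
    · exact hymax y' ⟨hc, x', hj⟩
    · obtain ⟨y'', a, b, c⟩ := stepY _ _ hj (Or.inl hc)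
      exact b.le.trans (hymax y'' ⟨a, x', c⟩)
  have hB : 0 < h y := by
    rcases lt_trichotomy (h y) 0 with hl | hl | hl
    · obtain ⟨y'', a, b, c⟩ := stepY _ _ hj₀ (Or.inr hl)
      exact absurd (hmax _ _ c) (not_le.2 b)
    · exact absurd hl (D.nz y hy0)
    · exact hl
  -- argmin in x
  have hXne : {x | h' x = 0 ∧ JoinedIn U p (x, y)}.Nonempty := by
    by_cases hc : h' x₀ = 0
    · exact ⟨x₀, hc, hj₀⟩
    · obtain ⟨y', a, -, b⟩ := stepX _ _ hj₀ (Or.inl hc)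
      exact ⟨y', a, b⟩
  obtain ⟨x, ⟨hx0, hj⟩, hxmin⟩ := Set.exists_min_image _ h
    (D.fin.subset fun y hy => hy.1) hXne
  have hA : h x < 0 := by
    rcases lt_trichotomy (h x) 0 with hl | hl | hl
    · exact hl
    · exact absurd hl (D.nz x hx0)
    · obtain ⟨y'', a, b, c⟩ := stepX _ _ hj (Or.inr hl)
      exact absurd (hxmin _ ⟨a, c⟩) (not_le.2 b)
  rcases lt_or_ge |y| |x| with hlt | hle
  · -- move y to -x
    have hJ : JoinedIn U p (x, -x) := by
      refine moveY x y (-x) hj ?_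
      intro t ht
      have htx : |t| ≤ |x| := by
        have h1 := abs_le.1 hlt.le
        have h2 := neg_abs_le x
        have h3 := le_abs_self x
        rw [mem_uIcc] at ht
        rw [abs_le]
        rcases ht with ⟨a, b⟩ | ⟨a, b⟩ <;> constructor <;> linarith
      have h4 := D.amp_le hx0 htx
      rw [abs_of_neg hA] at h4
      have h5 := neg_abs_le (h t)
      nlinarith
    have h1 := hmax _ _ hJ
    have h2 := D.amp_lt hy0 hx0 hlt
    rw [abs_of_neg hA, abs_of_pos hB] at h2
    rw [D.odd] at h1
    linarith
  · have hJ1 : JoinedIn U p (-y, y) := by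
      refine moveX x (-y) y hj ?_
      intro t ht
      obtain ⟨t0, ht0m, ht0⟩ := (isCompact_uIcc (a := x) (b := -y)).exists_isMaxOn
        ⟨x, left_mem_uIcc⟩ D.cont.continuousOn
      have hle' : m * h t ≤ m * h t0 := mul_le_mul_of_nonneg_left (ht0 ht) m0.le
      refine hle'.trans_lt ?_
      by_cases e1 : t0 = x
      · rw [e1]; nlinarith
      by_cases e2 : t0 = -y
      · rw [e2, D.odd]; nlinarith
      have hIoo : uIcc x (-y) ∈ 𝓝 t0 := by
        rw [uIcc, Icc_mem_nhds_iff]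
        rw [mem_uIcc] at ht0m
        rcases ht0m with ⟨a, b⟩ | ⟨a, b⟩
        · have a' := lt_of_le_of_ne a (Ne.symm e1)
          have b' := lt_of_le_of_ne b e2
          exact ⟨(min_le_left _ _).trans_lt a', b'.trans_le (le_max_right _ _)⟩
        · have a' := lt_of_le_of_ne a (Ne.symm e2)
          have b' := lt_of_le_of_ne b e1
          exact ⟨(min_le_right _ _).trans_lt a', b'.trans_le (le_max_left _ _)⟩
      have hcrit : h' t0 = 0 := (ht0.isLocalMax hIoo).hasDerivAt_eq_zero (D.hd t0)
      have habs : |t0| < |y| := by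
        have h1 := abs_le.1 hle
        have h2 := neg_abs_le y
        have h3 := le_abs_self y
        have := mem_of_mem_nhds hIoo
        rw [mem_uIcc] at ht0m
        rw [abs_lt]
        rcases ht0m with ⟨a, b⟩ | ⟨a, b⟩
        · have a' := lt_of_le_of_ne a (Ne.symm e1)
          have b' := lt_of_le_of_ne b e2
          constructor <;> linarith
        · have a' := lt_of_le_of_ne a (Ne.symm e2)
          have b' := lt_of_le_of_ne b e1
          constructor <;> linarith
      have h6 := hgood t0 y hcrit hy0 (D.amp_lt hcrit hy0 habs)
      rw [abs_of_pos hB] at h6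
      exact (mul_le_mul_of_nonneg_left (le_abs_self _) m0.le).trans_lt h6
    have hz0 : h' (-y) = 0 := by rw [D.even', hy0]
    have hzB : h (-y) < 0 := by rw [D.odd]; linarith
    have hmz : m * h (-y) < h (-y) := by nlinarith
    have hJ2 : JoinedIn U p (-y, -y) := by
      refine moveY _ _ _ hJ1 ?_
      intro t ht
      have hty : |t| ≤ |y| := by
        have h2 := neg_abs_le y
        have h3 := le_abs_self y
        rw [mem_uIcc] at ht
        rw [abs_le]
        rcases ht with ⟨a, b⟩ | ⟨a, b⟩ <;> constructor <;> linarith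
      have h4 := D.amp_le hy0 hty
      rw [abs_of_pos hB] at h4
      have h5 := neg_abs_le (h t)
      rw [D.odd] at hmz ⊢
      linarith
    rcases D.climb_out (-y) hz0 hzB with ⟨u, h1, h2, h3, h4⟩ | hall
    · have hJ3 := moveY _ _ u hJ2 fun t ht => hmz.trans_le (h4 t ht)
      have h5 := hmax _ _ hJ3
      have h6 := D.amp_lt hz0 h2 h1
      rw [abs_of_neg hzB] at h6
      rw [D.odd] at h6 h3
      rcases abs_choice (h u) with h7 | h7 <;> rw [h7] at h6 <;> linarith
    · exact hno ⟨_, _, hJ2, fun t ht => hmz.trans_le (hall t ht)⟩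

theorem pathConn (D : OscData h h' N) {m : ℝ} (hm : 1 < m)
    (hgood : ∀ c d, h' c = 0 → h' d = 0 → |h c| < |h d| → m * |h c| < |h d|) :
    IsPathConnected {q : ℝ × ℝ | m * h q.1 < h q.2} := by
  rw [isPathConnected_iff]
  constructor
  · obtain ⟨y, hy⟩ := (D.top.eventually (eventually_gt_atTop (m * h 0))).exists
    exact ⟨(0, y), hy⟩
  · intro p hp q hq
    obtain ⟨x1, y1, hj1, ht1⟩ := D.core hm hgood hp
    obtain ⟨x2, y2, hj2, ht2⟩ := D.core hm hgood hq
    obtain ⟨t0, -, ht0⟩ := (isCompact_uIcc (a := x1) (b := x2)).exists_isMaxOn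
        ⟨x1, left_mem_uIcc⟩ D.cont.continuousOn
    obtain ⟨T, ⟨hT, hT1⟩, hT2⟩ := (((D.top.eventually (eventually_gt_atTop (m * h t0))).and
      (eventually_ge_atTop y1)).and (eventually_ge_atTop y2)).exists
    have a1 : JoinedIn {q : ℝ × ℝ | m * h q.1 < h q.2} (x1, y1) (x1, T) := by
      apply JoinedIn.of_segment_subset
      rw [← Prod.image_mk_segment_right]
      rintro _ ⟨t, hts, rfl⟩
      rw [segment_eq_Icc hT1] at hts
      exact ht1 t hts.1
    have a2 : JoinedIn {q : ℝ × ℝ | m * h q.1 < h q.2} (x2, y2) (x2, T) := by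
      apply JoinedIn.of_segment_subset
      rw [← Prod.image_mk_segment_right]
      rintro _ ⟨t, hts, rfl⟩
      rw [segment_eq_Icc hT2] at hts
      exact ht2 t hts.1
    have a3 : JoinedIn {q : ℝ × ℝ | m * h q.1 < h q.2} (x1, T) (x2, T) := by
      apply JoinedIn.of_segment_subset
      rw [← Prod.image_mk_segment_left]
      rintro _ ⟨t, hts, rfl⟩
      rw [segment_eq_uIcc] at hts
      exact (mul_le_mul_of_nonneg_left (ht0 hts) (by linarith)).trans_lt hT
    exact ((hj1.trans a1).trans a3).trans (hj2.trans a2).symm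

theorem pathConnAB (D : OscData h h' N) {m : ℝ} (hm : 1 < m)
    (hgood : ∀ c d, h' c = 0 → h' d = 0 → |h c| < |h d| → m * |h c| < |h d|)
    {a b : ℝ} (ha : a ≠ 0) (hb : b ≠ 0) (hab : |a| = m * |b| ∨ |b| = m * |a|) :
    IsPathConnected {q : ℝ × ℝ | 0 < a * h q.1 + b * h q.2} := by
  have hU := D.pathConn hm hgood
  have sg : ∀ a : ℝ, a ≠ 0 → ∃ s : ℝ, (s = 1 ∨ s = -1) ∧ ∀ x, a * h x = |a| * h (s * x) := by
    intro a ha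
    rcases lt_or_gt_of_ne ha with h | h
    · exact ⟨-1, Or.inr rfl, fun x => by rw [abs_of_neg h, neg_one_mul, D.odd]; ring⟩
    · exact ⟨1, Or.inl rfl, fun x => by rw [abs_of_pos h, one_mul]⟩
  obtain ⟨s, hs, hsa⟩ := sg a ha
  obtain ⟨r, hr, hrb⟩ := sg b hb
  have hs2 : s * s = 1 := by rcases hs with rfl | rfl <;> norm_num
  have hr2 : r * r = 1 := by rcases hr with rfl | rfl <;> norm_num
  have a0 := abs_pos.2 ha
  have b0 := abs_pos.2 hb
  rcases hab with hab | hab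
  · have : {q : ℝ × ℝ | 0 < a * h q.1 + b * h q.2} =
        (fun q : ℝ × ℝ => (-s * q.1, r * q.2)) '' {q : ℝ × ℝ | m * h q.1 < h q.2} := by
      ext ⟨x, y⟩
      simp only [mem_ofPred_eq, mem_image, hsa, hrb, Prod.mk.injEq, Prod.exists]
      constructor
      · intro hpos
        refine ⟨-(s * x), r * y, ?_, by linear_combination x * hs2, by linear_combination y * hr2⟩
        rw [D.odd]
        rw [hab] at hpos
        have : 0 < |b| * (m * h (s * x) + h (r * y)) := by linarith
        have := pos_of_mul_pos_right this b0.le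
        linarith
      · rintro ⟨u, v, huv, rfl, rfl⟩
        have e1 : s * (-s * u) = -u := by linear_combination -u * hs2
        have e2 : r * (r * v) = v := by linear_combination v * hr2
        rw [e1, e2, D.odd, hab]
        nlinarith
    rw [this]
    exact hU.image (by fun_prop)
  · have : {q : ℝ × ℝ | 0 < a * h q.1 + b * h q.2} =
        (fun q : ℝ × ℝ => (s * q.2, -r * q.1)) '' {q : ℝ × ℝ | m * h q.1 < h q.2} := by
      ext ⟨x, y⟩
      simp only [mem_ofPred_eq, mem_image, hsa, hrb, Prod.mk.injEq, Prod.exists]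
      constructor
      · intro hpos
        refine ⟨-(r * y), s * x, ?_, by linear_combination x * hs2, by linear_combination y * hr2⟩
        rw [D.odd]
        rw [hab] at hpos
        have : 0 < |a| * (m * h (r * y) + h (s * x)) := by linarith
        have := pos_of_mul_pos_right this a0.le
        linarith
      · rintro ⟨u, v, huv, rfl, rfl⟩
        have e1 : r * (-r * u) = -u := by linear_combination -u * hr2
        have e2 : s * (s * v) = v := by linear_combination v * hs2
        rw [e1, e2, D.odd, hab]
        nlinarith
    rw [this]
    exact hU.image (by fun_prop)

theorem no_crit (D : OscData h h' N) {m : ℝ} (hm : 1 < m)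
    (hgood : ∀ c d, h' c = 0 → h' d = 0 → |h c| < |h d| → m * |h c| < |h d|)
    {a b : ℝ} (ha : a ≠ 0) (hb : b ≠ 0) (hab : |a| = m * |b| ∨ |b| = m * |a|)
    {x y : ℝ} (hx : h' x = 0) (hy : h' y = 0) (h0 : a * h x + b * h y = 0) : False := by
  have e : |a| * |h x| = |b| * |h y| := by
    rw [← abs_mul, ← abs_mul, eq_neg_of_add_eq_zero_left h0, abs_neg]
  have a0 := abs_pos.2 ha
  have b0 := abs_pos.2 hb
  have main : ∀ x y, h' x = 0 → h' y = 0 → m * |h x| = |h y| → False := by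
    intro x y hx hy e
    have hx1 := abs_pos.2 (D.nz x hx)
    have : |h x| < |h y| := by nlinarith
    have := hgood x y hx hy this
    linarith
  rcases hab with hab | hab
  · apply main x y hx hy
    rw [hab] at e
    apply mul_left_cancel₀ b0.ne'
    linarith
  · apply main y x hy hx
    rw [hab] at e
    apply mul_left_cancel₀ a0.ne'
    linarith

theorem good_near (D : OscData h h' N) : ∃ ε > 0, ∀ m, 1 < m → m < 1 + ε →
    ∀ c d, h' c = 0 → h' d = 0 → |h c| < |h d| → m * |h c| < |h d| := by
  have : ∀ᶠ m in 𝓝 (1:ℝ), ∀ q ∈ ({x | h' x = 0} ×ˢ {x | h' x = 0} : Set (ℝ × ℝ)),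
      |h q.1| < |h q.2| → m * |h q.1| < |h q.2| := by
    rw [Filter.eventually_all_finite (D.fin.prod D.fin)]
    intro q hq
    by_cases hlt : |h q.1| < |h q.2|
    · have hc : Continuous fun m : ℝ => m * |h q.1| := by fun_prop
      filter_upwards [hc.continuousAt.eventually (gt_mem_nhds (show 1 * |h q.1| < |h q.2| by simpa using hlt))] with m hm _
      exact hm
    · exact Eventually.of_forall fun m h => absurd h hlt
  obtain ⟨ε, hε, hball⟩ := Metric.eventually_nhds_iff.1 this
  refine ⟨ε, hε, fun m h1 h2 c d hc hd => ?_⟩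
  exact hball (by rw [Real.dist_eq, abs_of_pos] <;> linarith) (c, d) ⟨hc, hd⟩

end OscData

theorem H_succ_succ (n : ℕ) : H (n + 2) = Polynomial.C 2 * Polynomial.X * H (n + 1) -
    Polynomial.C (2 * (n + 1) : ℝ) * H n := by rw [H]

theorem H_deriv (n : ℕ) : (H (n + 1)).derivative = Polynomial.C (2 * (n + 1) : ℝ) * H n := by
  induction n using Nat.strong_induction_on with
  | _ n ih =>
    match n with
    | 0 => simp [H]
    | 1 =>
      simp [H]
      ring
    | k + 2 =>
      have h1 := ih (k + 1) (by omega)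
      have h2 := ih k (by omega)
      have e : H (k + 1 + 1) = _ := H_succ_succ k
      rw [show k + 2 + 1 = (k + 1) + 2 from rfl, H_succ_succ (k + 1)]
      simp only [Polynomial.derivative_sub, Polynomial.derivative_mul, Polynomial.derivative_C,
        Polynomial.derivative_X, h1, h2]
      rw [show k + 1 + 1 = k + 2 from rfl, H_succ_succ k]
      simp only [map_add, map_mul, map_one, Nat.cast_add, Nat.cast_one, Nat.cast_ofNat]
      have c2 : (Polynomial.C (2:ℝ)) = 2 := map_ofNat Polynomial.C 2
      rw [c2]
      ring

theorem H_eval_deriv (n : ℕ) (x : ℝ) :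
    (H (n + 1)).derivative.eval x = 2 * (n + 1) * (H n).eval x := by
  rw [H_deriv]; simp

theorem H_ode (n : ℕ) (x : ℝ) : (H n).derivative.derivative.eval x =
    2 * x * (H n).derivative.eval x - 2 * n * (H n).eval x := by
  match n with
  | 0 => simp [H]
  | 1 => simp [H]; ring
  | k + 2 =>
    have e2 : (H (k + 2)).derivative.derivative.eval x = 2 * (k + 2) * (2 * (k + 1) * (H k).eval x) := by
      rw [show k + 2 = (k + 1) + 1 from rfl, H_deriv, Polynomial.derivative_C_mul,
        Polynomial.eval_C_mul, H_eval_deriv]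
      push_cast; ring
    have e1 : (H (k + 2)).derivative.eval x = 2 * (k + 2) * (H (k + 1)).eval x := by
      rw [show k + 2 = (k + 1) + 1 from rfl, H_eval_deriv]
      push_cast; ring
    rw [e2, e1, H_succ_succ]
    simp
    ring

theorem H_parity (n : ℕ) (x : ℝ) : (H n).eval (-x) = (-1) ^ n * (H n).eval x ∧
    (H (n + 1)).eval (-x) = (-1) ^ (n + 1) * (H (n + 1)).eval x := by
  induction n with
  | zero => simp [H]
  | succ k ih =>
    refine ⟨ih.2, ?_⟩
    rw [show k + 1 + 1 = k + 2 from rfl, H_succ_succ]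
    simp only [Polynomial.eval_sub, Polynomial.eval_mul, Polynomial.eval_C, Polynomial.eval_X,
      ih.1, ih.2]
    ring

theorem H_no_common (n : ℕ) (x : ℝ) : ¬ ((H (n + 1)).eval x = 0 ∧ (H n).eval x = 0) := by
  induction n with
  | zero => simp [H]
  | succ k ih =>
    rintro ⟨h1, h2⟩
    apply ih
    refine ⟨h2, ?_⟩
    rw [show k + 1 + 1 = k + 2 from rfl, H_succ_succ] at h1
    simp only [Polynomial.eval_sub, Polynomial.eval_mul, Polynomial.eval_C, Polynomial.eval_X,
      h2] at h1
    have : (2 * ((k:ℝ) + 1)) ≠ 0 := by positivity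
    have h3 : (2 * ((k:ℝ) + 1)) * (H k).eval x = 0 := by linarith
    exact (mul_eq_zero.1 h3).resolve_left this

theorem H_lead (n : ℕ) : (H n).natDegree ≤ n ∧ (H n).coeff n = 2 ^ n ∧
    (H (n + 1)).natDegree ≤ n + 1 ∧ (H (n + 1)).coeff (n + 1) = 2 ^ (n + 1) := by
  induction n with
  | zero =>
    refine ⟨by simp [H], by simp [H], ?_, by simp [H]⟩
    rw [H]
    exact (Polynomial.natDegree_C_mul_le _ _).trans Polynomial.natDegree_X_le
  | succ k ih =>
    obtain ⟨h1, h2, h3, h4⟩ := ih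
    refine ⟨h3, h4, ?_, ?_⟩
    · rw [show k + 1 + 1 = k + 2 from rfl, H_succ_succ]
      refine (Polynomial.natDegree_sub_le _ _).trans (max_le ?_ ?_)
      · refine Polynomial.natDegree_mul_le.trans ?_
        have := (Polynomial.natDegree_C_mul_le (2:ℝ) Polynomial.X).trans Polynomial.natDegree_X_le
        omega
      · refine (Polynomial.natDegree_C_mul_le _ _).trans ?_
        omega
    · rw [show k + 1 + 1 = k + 2 from rfl, H_succ_succ, Polynomial.coeff_sub, mul_assoc,
        Polynomial.coeff_C_mul, Polynomial.coeff_C_mul, Polynomial.coeff_X_mul, h4,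
        Polynomial.coeff_eq_zero_of_natDegree_lt (show (H k).natDegree < k + 2 by omega)]
      ring

theorem H_osc (n : ℕ) (hodd : Odd n) (hpos : 0 < n) :
    OscData (fun x => (H n).eval x) (fun x => (H n).derivative.eval x) n := by
  obtain ⟨hl1, hl2, -, -⟩ := H_lead n
  have hdeg : (H n).natDegree = n := by
    apply le_antisymm hl1
    apply Polynomial.le_natDegree_of_ne_zero
    rw [hl2]; positivity
  have hlead : (H n).leadingCoeff = 2 ^ n := by rw [Polynomial.leadingCoeff, hdeg, hl2]
  have hne : H n ≠ 0 := by
    intro h; rw [h] at hlead; simp at hlead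
    exact absurd hlead.symm (by positivity)
  have hder : (H n).derivative ≠ 0 := by
    intro h
    have := Polynomial.derivative_eq_zero.1 h
    omega
  refine ⟨by exact_mod_cast hpos, fun x => (H n).hasDerivAt x, ?_, ?_, ?_, ?_, ?_⟩
  · intro x
    have := (H n).derivative.hasDerivAt x
    rw [H_ode] at this
    exact this
  · intro x
    have := (H_parity n x).1
    rw [hodd.neg_one_pow] at this
    simpa using this
  · apply Polynomial.tendsto_atTop_of_leadingCoeff_nonneg
    · rw [Polynomial.degree_eq_natDegree hne, hdeg]
      exact_mod_cast hpos
    · rw [hlead]; positivity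
  · have := (H n).derivative.finite_setOfPred_isRoot hder
    exact this
  · intro x hx h0
    obtain ⟨k, rfl⟩ : ∃ k, n = k + 1 := ⟨n - 1, by omega⟩
    apply H_no_common k x
    refine ⟨h0, ?_⟩
    simp only [H_eval_deriv] at hx
    exact (mul_eq_zero.1 hx).resolve_left (by positivity)

theorem angle_near (θ₀ : ℝ) (hc : Real.cos θ₀ ≠ 0) (hs : Real.sin θ₀ ≠ 0)
    (heq : |Real.cos θ₀| = |Real.sin θ₀|) (ε : ℝ) (hε : 0 < ε) :
    ∀ᶠ θ in 𝓝 θ₀, |Real.cos θ| ≠ |Real.sin θ| → (Real.cos θ ≠ 0 ∧ Real.sin θ ≠ 0 ∧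
      ∃ m, 1 < m ∧ m < 1 + ε ∧ (|Real.cos θ| = m * |Real.sin θ| ∨ |Real.sin θ| = m * |Real.cos θ|)) := by
  have c0 := abs_pos.2 hc
  have s0 := abs_pos.2 hs
  have cc : Continuous fun θ => |Real.cos θ| := by fun_prop
  have cs : Continuous fun θ => |Real.sin θ| := by fun_prop
  have k1 : |Real.cos θ₀| < (1 + ε) * |Real.sin θ₀| := by rw [heq]; nlinarith
  have k2 : |Real.sin θ₀| < (1 + ε) * |Real.cos θ₀| := by rw [heq]; nlinarith
  filter_upwards [cc.continuousAt.eventually (lt_mem_nhds c0),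
    cs.continuousAt.eventually (lt_mem_nhds s0),
    cc.continuousAt.eventually_lt (continuousAt_const.mul cs.continuousAt) k1,
    cs.continuousAt.eventually_lt (continuousAt_const.mul cc.continuousAt) k2] with θ h1 h2 h3 h4 hne
  refine ⟨abs_pos.1 h1, abs_pos.1 h2, ?_⟩
  rcases lt_or_gt_of_ne hne with h | h
  · exact ⟨|Real.sin θ| / |Real.cos θ|, (one_lt_div h1).2 h, (div_lt_iff₀ h1).2 h4,
      Or.inr (by field_simp)⟩
  · exact ⟨|Real.cos θ| / |Real.sin θ|, (one_lt_div h2).2 h, (div_lt_iff₀ h2).2 h3,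
      Or.inl (by field_simp)⟩

theorem angle_ne {θ : ℝ} (h : |Real.cos θ| = |Real.sin θ|) : Real.cos (2 * θ) = 0 := by
  have := sq_eq_sq_iff_abs_eq_abs (Real.cos θ) (Real.sin θ) |>.2 h
  rw [Real.cos_two_mul']; linarith

theorem theta_main (n : ℕ) (hodd : Odd n) (hpos : 0 < n) {θ m : ℝ} (hm : 1 < m)
    (hgood : ∀ c d, (H n).derivative.eval c = 0 → (H n).derivative.eval d = 0 →
      |(H n).eval c| < |(H n).eval d| → m * |(H n).eval c| < |(H n).eval d|)
    (ha : Real.cos θ ≠ 0) (hb : Real.sin θ ≠ 0)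
    (hab : |Real.cos θ| = m * |Real.sin θ| ∨ |Real.sin θ| = m * |Real.cos θ|) :
    (nodalSet n θ).Nonempty ∧
        IsConnected (nodalSet n θ) ∧
        (∀ p ∈ nodalSet n θ, fderiv ℝ (Phi n θ) p ≠ 0) ∧
        numNodalDomains n θ = 2 := by
  have D := H_osc n hodd hpos
  have hdiff : Differentiable ℝ (Phi n θ) := by
    unfold Phi
    have e1 : Differentiable ℝ (fun p : ℝ × ℝ => (H n).eval p.1) :=
      (H n).differentiable.comp differentiable_fst
    have e2 : Differentiable ℝ (fun p : ℝ × ℝ => (H n).eval p.2) :=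
      (H n).differentiable.comp differentiable_snd
    fun_prop
  have hpos' : IsPathConnected {p | 0 < Phi n θ p} := by
    have := D.pathConnAB hm hgood ha hb hab
    convert this using 1
    ext p
    exact mul_pos_iff_of_pos_right (Real.exp_pos _)
  have hneg' : IsPathConnected {p | Phi n θ p < 0} := by
    have := D.pathConnAB hm hgood (neg_ne_zero.2 ha) (neg_ne_zero.2 hb)
      (by rw [abs_neg, abs_neg]; exact hab)
    convert this using 1
    ext p
    have e : -Real.cos θ * (H n).eval p.1 + -Real.sin θ * (H n).eval p.2 =
      -(Real.cos θ * (H n).eval p.1 + Real.sin θ * (H n).eval p.2) := by ring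
    simp only [mem_ofPred_eq, e, neg_pos]
    exact ⟨fun h => neg_of_mul_neg_left h (Real.exp_pos _).le, fun h => mul_neg_of_neg_of_pos h (Real.exp_pos _)⟩
  have h00 : Phi n θ (0, 0) = 0 := by
    have := D.odd 0
    simp only [neg_zero] at this
    have h0 : (H n).eval 0 = 0 := by linarith
    simp [Phi, h0]
  have hreg : ∀ p, Phi n θ p = 0 → fderiv ℝ (Phi n θ) p ≠ 0 := by
    rintro ⟨x, y⟩ hp hf
    have hF : HasFDerivAt (Phi n θ) (0 : ℝ × ℝ →L[ℝ] ℝ) (x, y) := by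
      rw [← hf]; exact (hdiff _).hasFDerivAt
    have hbr : Real.cos θ * (H n).eval x + Real.sin θ * (H n).eval y = 0 :=
      (mul_eq_zero.1 hp).resolve_right (Real.exp_pos _).ne'
    have hE : Real.exp (-(x ^ 2 + y ^ 2) / 2) ≠ 0 := (Real.exp_pos _).ne'
    have dx : HasDerivAt (fun t => Phi n θ (t, y)) 0 x := by
      have := hF.comp_hasDerivAt x ((hasDerivAt_id x).prodMk (hasDerivAt_const x y))
      rw [zero_apply] at this
      exact this
    have dy : HasDerivAt (fun t => Phi n θ (x, t)) 0 y := by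
      have := hF.comp_hasDerivAt y ((hasDerivAt_const y x).prodMk (hasDerivAt_id y))
      rw [zero_apply] at this
      exact this
    have hx : (H n).derivative.eval x = 0 := by
      have b1 : HasDerivAt (fun t => Real.cos θ * (H n).eval t + Real.sin θ * (H n).eval y)
          (Real.cos θ * (H n).derivative.eval x) x :=
        ((D.hd x).const_mul _).add_const _
      have b2 : DifferentiableAt ℝ (fun t : ℝ => Real.exp (-(t ^ 2 + y ^ 2) / 2)) x := by fun_prop
      have b3 := dx.unique (b1.mul b2.hasDerivAt)
      simp only [hbr, zero_mul, add_zero] at b3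
      have := (mul_eq_zero.1 b3.symm).resolve_right hE
      exact (mul_eq_zero.1 this).resolve_left ha
    have hy : (H n).derivative.eval y = 0 := by
      have b1 : HasDerivAt (fun t => Real.cos θ * (H n).eval x + Real.sin θ * (H n).eval t)
          (Real.sin θ * (H n).derivative.eval y) y :=
        ((D.hd y).const_mul _).const_add _
      have b2 : DifferentiableAt ℝ (fun t : ℝ => Real.exp (-(x ^ 2 + t ^ 2) / 2)) y := by fun_prop
      have b3 := dy.unique (b1.mul b2.hasDerivAt)
      simp only [hbr, zero_mul, add_zero] at b3
      have := (mul_eq_zero.1 b3.symm).resolve_right hE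
      exact (mul_eq_zero.1 this).resolve_left hb
    exact D.no_crit hm hgood ha hb hab hx hy hbr
  obtain ⟨r1, r2⟩ := nodal_abstract (Phi n θ) hdiff.continuous hpos' hneg' ⟨_, h00⟩ hreg
  exact ⟨⟨_, h00⟩, r1, fun p hp => hreg p hp, r2⟩

end

open Real Set in
/-- **Theorem 1.1.** For `n` odd there are open intervals `I_{π/4} ∋ π/4` and
`I_{3π/4} ∋ 3π/4` such that for every `θ` in their union, other than `π/4` and `3π/4`,
the nodal set `N(Φ^θ_n)` is a nonempty connected regular curve (the gradient of
`Φ^θ_n` vanishes nowhere on it), and `Φ^θ_n` has exactly two nodal domains in `ℝ²`. -/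
theorem two_nodal_domains_near_pi_div_four_and_three_pi_div_four
    (n : ℕ) (hodd : Odd n) (hpos : 0 < n) :
    ∃ a₁ b₁ a₂ b₂ : ℝ, a₁ < π / 4 ∧ π / 4 < b₁ ∧ a₂ < 3 * π / 4 ∧ 3 * π / 4 < b₂ ∧
      ∀ θ ∈ (Set.Ioo a₁ b₁ ∪ Set.Ioo a₂ b₂) \ {π / 4, 3 * π / 4},
        (nodalSet n θ).Nonempty ∧
        IsConnected (nodalSet n θ) ∧
        (∀ p ∈ nodalSet n θ, fderiv ℝ (Phi n θ) p ≠ 0) ∧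
        numNodalDomains n θ = 2 := by
  obtain ⟨ε, hε, hgood⟩ := (H_osc n hodd hpos).good_near
  have hpi := Real.pi_pos
  have s2 : (0:ℝ) < √2 / 2 := by positivity
  have e3 : 3 * π / 4 = π - π / 4 := by ring
  have k1 := angle_near (π / 4) (by rw [Real.cos_pi_div_four]; exact s2.ne')
    (by rw [Real.sin_pi_div_four]; exact s2.ne')
    (by rw [Real.cos_pi_div_four, Real.sin_pi_div_four]) ε hε
  have k2 := angle_near (3 * π / 4)
    (by rw [e3, Real.cos_pi_sub, Real.cos_pi_div_four]; exact neg_ne_zero.2 s2.ne')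
    (by rw [e3, Real.sin_pi_sub, Real.sin_pi_div_four]; exact s2.ne')
    (by rw [e3, Real.cos_pi_sub, Real.sin_pi_sub, Real.cos_pi_div_four, Real.sin_pi_div_four,
      abs_neg]) ε hε
  obtain ⟨δ₁, hδ₁, h1⟩ := Metric.eventually_nhds_iff.1 k1
  obtain ⟨δ₂, hδ₂, h2⟩ := Metric.eventually_nhds_iff.1 k2
  refine ⟨π / 4 - min δ₁ (π / 4), π / 4 + min δ₁ (π / 4), 3 * π / 4 - min δ₂ (π / 4),
    3 * π / 4 + min δ₂ (π / 4), ?_, ?_, ?_, ?_, ?_⟩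
  · have := lt_min hδ₁ (by positivity : 0 < π / 4); linarith
  · have := lt_min hδ₁ (by positivity : 0 < π / 4); linarith
  · have := lt_min hδ₂ (by positivity : 0 < π / 4); linarith
  · have := lt_min hδ₂ (by positivity : 0 < π / 4); linarith
  rintro θ ⟨hθ, hne⟩
  have ne1 : θ ≠ π / 4 := fun h => hne (Or.inl h)
  have ne2 : θ ≠ 3 * π / 4 := fun h => hne (Or.inr h)
  have hpiII : π / 2 ∈ Icc 0 π := ⟨by linarith, by linarith⟩
  have key : Real.cos θ ≠ 0 ∧ Real.sin θ ≠ 0 ∧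
      ∃ m, 1 < m ∧ m < 1 + ε ∧
        (|Real.cos θ| = m * |Real.sin θ| ∨ |Real.sin θ| = m * |Real.cos θ|) := by
    rcases hθ with ⟨a, b⟩ | ⟨a, b⟩
    · have l1 := min_le_left δ₁ (π / 4)
      have l2 := min_le_right δ₁ (π / 4)
      refine h1 (by rw [Real.dist_eq, abs_lt]; constructor <;> linarith) ?_
      intro he
      have := Real.injOn_cos (show 2 * θ ∈ Icc 0 π from ⟨by linarith, by linarith⟩) hpiII
        (by rw [angle_ne he, Real.cos_pi_div_two])
      exact ne1 (by linarith)
    · have l1 := min_le_left δ₂ (π / 4)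
      have l2 := min_le_right δ₂ (π / 4)
      refine h2 (by rw [Real.dist_eq, abs_lt]; constructor <;> linarith) ?_
      intro he
      have := Real.injOn_cos (show 2 * π - 2 * θ ∈ Icc 0 π from ⟨by linarith, by linarith⟩) hpiII
        (by rw [Real.cos_two_pi_sub, angle_ne he, Real.cos_pi_div_two])
      exact ne2 (by linarith)
  obtain ⟨ha, hb, m, hm1, hm2, hab⟩ := key
  exact theta_main n hodd hpos hm1 (hgood m hm1 hm2) ha hb hab
end

section
/- Let n ≥ 2 and let 0 ≤ s < t be real numbers with H_n'(s) = 0 and H_n'(t) = 0. Then |H_n(s)| < |H_n(t)|; that is, the successive relative maxima of |H_n| form an increasing sequence on [0,∞). -/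
theorem H_deriv_aux (n : ℕ) : Polynomial.derivative (H (n+1)) = Polynomial.C (2 * (n + 1) : ℝ) * H n ∧
    Polynomial.derivative (H (n+2)) = Polynomial.C (2 * (n + 2) : ℝ) * H (n+1) := by
  induction n with
  | zero =>
    constructor
    · simp [H]
    · have h2C : (Polynomial.C (2:ℝ)) = 2 := rfl
      simp [H, h2C]; ring
  | succ n ih =>
    obtain ⟨h1, h2⟩ := ih
    refine ⟨by rw [h2]; push_cast; congr 3; ring, ?_⟩
    have e : H (n+1+2) = Polynomial.C 2 * Polynomial.X * H (n + 2) - Polynomial.C (2 * ((n+1 : ℕ) + 1) : ℝ) * H (n+1) := by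
      rw [H]
    have e2 : H (n+1+1) = Polynomial.C 2 * Polynomial.X * H (n + 1) - Polynomial.C (2 * (n + 1) : ℝ) * H n := by
      rw [H]
    rw [e]
    simp only [Polynomial.derivative_sub, Polynomial.derivative_mul, Polynomial.derivative_C, Polynomial.derivative_X, h1, h2]
    rw [show H (n+2) = H (n+1+1) from rfl, e2]
    simp only [Polynomial.C_mul, Polynomial.C_add, Polynomial.C_1, Nat.cast_add, Nat.cast_one]
    have h2C : (Polynomial.C (2:ℝ)) = 2 := rfl
    rw [h2C]
    ring

theorem H_ne_zero (n : ℕ) : H n ≠ 0 := by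
  induction n with
  | zero => simp [H]
  | succ n ih =>
    intro h
    have := (H_deriv_aux n).1
    rw [h, Polynomial.derivative_zero] at this
    rcases mul_eq_zero.1 this.symm with h | h
    · rw [Polynomial.C_eq_zero] at h
      have : (0:ℝ) ≤ n := n.cast_nonneg
      linarith
    · exact ih h

theorem abs_hermite_increasing_at_critical_points (n : ℕ) (hn : 2 ≤ n) (s t : ℝ)
    (hs : 0 ≤ s) (hst : s < t)
    (hs' : (Polynomial.derivative (H n)).eval s = 0)
    (ht' : (Polynomial.derivative (H n)).eval t = 0) :
    |(H n).eval s| < |(H n).eval t| := by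
  obtain ⟨m, rfl⟩ : ∃ m, n = m + 2 := ⟨n - 2, by omega⟩
  have h1 := (H_deriv_aux m).1
  have h2 := (H_deriv_aux m).2
  have e2 : H (m+2) = Polynomial.C 2 * Polynomial.X * H (m + 1) - Polynomial.C (2 * (m + 1) : ℝ) * H m := by
    rw [H]
  set F : Polynomial ℝ := Polynomial.C (2 * (m + 2) : ℝ) * H (m+2) ^ 2
    + (Polynomial.C (2 * (m + 2) : ℝ) * H (m+1)) ^ 2 with hF
  have hF' : Polynomial.derivative F
      = Polynomial.C 4 * Polynomial.X * (Polynomial.C (2 * (m + 2) : ℝ) * H (m+1)) ^ 2 := by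
    rw [hF]
    simp only [Polynomial.derivative_add, Polynomial.derivative_mul, Polynomial.derivative_C,
      Polynomial.derivative_pow, h1, h2]
    rw [e2]
    have h2C : (Polynomial.C (2:ℝ)) = 2 := rfl
    have h4C : (Polynomial.C (4:ℝ)) = 4 := rfl
    simp only [Polynomial.C_mul, Polynomial.C_add, Polynomial.C_1, h2C, h4C]
    norm_num [h2C]
    ring
  have hm : (0:ℝ) ≤ m := m.cast_nonneg
  have hmono : MonotoneOn (fun x => F.eval x) (Set.Icc s t) := by
    apply monotoneOn_of_deriv_nonneg (convex_Icc s t) F.continuous.continuousOn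
      F.differentiable.differentiableOn
    intro x hx
    rw [interior_Icc] at hx
    have hx0 : 0 ≤ x := hs.trans hx.1.le
    rw [Polynomial.deriv, hF']
    simp only [Polynomial.eval_mul, Polynomial.eval_C, Polynomial.eval_X, Polynomial.eval_pow]
    positivity
  have hlt : F.eval s < F.eval t := by
    refine lt_of_le_of_ne (hmono ⟨le_rfl, hst.le⟩ ⟨hst.le, le_rfl⟩ hst.le) fun heq => ?_
    have hc : F = Polynomial.C (F.eval s) := by
      apply Polynomial.eq_of_infinite_eval_eq
      refine (Set.Icc_infinite hst).mono fun x hx => ?_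
      have a := hmono ⟨le_rfl, hst.le⟩ hx hx.1
      have b := hmono hx ⟨hst.le, le_rfl⟩ hx.2
      simp only [Set.mem_ofPred_eq, Polynomial.eval_C]
      simp only at a b
      linarith
    rw [hc, Polynomial.derivative_C] at hF'
    have hne : Polynomial.C (2 * (m + 2) : ℝ) ≠ 0 := by
      rw [Ne, Polynomial.C_eq_zero]; positivity
    have h4 : Polynomial.C (4 : ℝ) ≠ 0 := by
      rw [Ne, Polynomial.C_eq_zero]; norm_num
    exact mul_ne_zero (mul_ne_zero h4 Polynomial.X_ne_zero)
      (pow_ne_zero 2 (mul_ne_zero hne (H_ne_zero (m+1)))) hF'.symm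
  rw [h2] at hs' ht'
  simp only [hF, Polynomial.eval_add, Polynomial.eval_pow, hs', ht'] at hlt
  rw [Polynomial.eval_mul, Polynomial.eval_mul (q := H (m+2) ^ 2)] at hlt
  simp only [Polynomial.eval_C, Polynomial.eval_pow] at hlt
  rw [← sq_lt_sq]
  have : (0:ℝ) < 2 * (m + 2) := by positivity
  nlinarith
end

section
/- Let n ≥ 1. For all but finitely many θ ∈ [0,π), the gradient of Φ^θ_n vanishes at no point of the nodal set N(Φ^θ_n); in particular, for such θ the nodal set N(Φ^θ_n) is a smooth 1-dimensional submanifold of ℝ². -/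
theorem H_der : ∀ n : ℕ, (H (n+1)).derivative = Polynomial.C (2 * (n + 1) : ℝ) * H n
  | 0 => by simp [H]
  | 1 => by
    simp [H]
    have : (Polynomial.C 2 : Polynomial ℝ) = 2 := rfl
    rw [this]; ring
  | n + 2 => by
    have h1 := H_der n
    have h2 := H_der (n+1)
    have e : H (n+1+1+1) = Polynomial.C 2 * Polynomial.X * H (n + 1+1) - Polynomial.C (2 * ((n+1 : ℕ) + 1) : ℝ) * H (n+1) := by
      rw [H]
    have e2 : H (n+1+1) = Polynomial.C 2 * Polynomial.X * H (n + 1) - Polynomial.C (2 * ((n : ℕ) + 1) : ℝ) * H n := by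
      rw [H]
    rw [show n+2+1 = n+1+1+1 from rfl, e]
    simp only [Polynomial.derivative_sub, Polynomial.derivative_mul, Polynomial.derivative_C, Polynomial.derivative_X, h1, h2]
    rw [show n+2 = n+1+1 from rfl, e2]
    simp only [map_mul, map_add, map_natCast, map_one, Nat.cast_add, Nat.cast_one]
    ring

theorem H_ne : ∀ n : ℕ, H n ≠ 0
  | 0 => by simp [H]
  | n + 1 => by
    intro h
    have h1 := H_der n
    rw [h, Polynomial.derivative_zero] at h1
    have h2 : (2 * (n + 1) : ℝ) ≠ 0 := by positivity
    exact mul_ne_zero (Polynomial.C_ne_zero.2 h2) (H_ne n) h1.symm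

theorem H_common (x : ℝ) : ∀ n : ℕ, (H n).eval x = 0 → (H (n+1)).eval x = 0 → False
  | 0 => by simp [H]
  | n + 1 => by
    intro h1 h2
    rw [H] at h2
    have h3 : (2 * (n + 1) : ℝ) ≠ 0 := by positivity
    simp only [Polynomial.eval_sub, Polynomial.eval_mul, Polynomial.eval_C, h1, mul_zero, zero_sub,
      neg_eq_zero, mul_eq_zero] at h2
    refine H_common x n ?_ h1
    rcases h2 with h2 | h2
    · exact absurd (mul_eq_zero.2 h2) h3
    · exact h2

theorem Phi_crit (n : ℕ) (θ : ℝ) (p : ℝ × ℝ)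
    (hz : Real.cos θ * (H n).eval p.1 + Real.sin θ * (H n).eval p.2 = 0)
    (hf : fderiv ℝ (Phi n θ) p = 0) :
    Real.cos θ * (H n).derivative.eval p.1 = 0 ∧ Real.sin θ * (H n).derivative.eval p.2 = 0 := by
  have hd : DifferentiableAt ℝ (Phi n θ) p := by
    have h1 : DifferentiableAt ℝ (fun q : ℝ × ℝ => (H n).eval q.1) p :=
      (H n).differentiable.differentiableAt.comp p differentiableAt_fst
    have h2 : DifferentiableAt ℝ (fun q : ℝ × ℝ => (H n).eval q.2) p :=
      (H n).differentiable.differentiableAt.comp p differentiableAt_snd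
    unfold Phi
    fun_prop
  have hF := hd.hasFDerivAt
  rw [hf] at hF
  have hexp : Real.exp (-(p.1 ^ 2 + p.2 ^ 2) / 2) ≠ 0 := (Real.exp_pos _).ne'
  constructor
  · have c : HasDerivAt (fun t : ℝ => (t, p.2)) ((1 : ℝ), (0 : ℝ)) p.1 :=
      (hasDerivAt_id p.1).prodMk (hasDerivAt_const _ _)
    have h1 : HasDerivAt (fun t : ℝ => Phi n θ (t, p.2)) 0 p.1 := by
      have := HasFDerivAt.comp_hasDerivAt (f := fun t : ℝ => (t, p.2)) p.1 hF c
      simpa [Function.comp_def] using this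
    have hE : DifferentiableAt ℝ (fun t : ℝ => Real.exp (-(t ^ 2 + p.2 ^ 2) / 2)) p.1 := by fun_prop
    have h2 := ((((H n).hasDerivAt p.1).const_mul (Real.cos θ)).add_const
      (Real.sin θ * (H n).eval p.2)).mul hE.hasDerivAt
    have := h1.unique h2
    rw [hz, zero_mul, add_zero] at this
    exact (mul_eq_zero.1 this.symm).resolve_right hexp
  · have c : HasDerivAt (fun t : ℝ => (p.1, t)) ((0 : ℝ), (1 : ℝ)) p.2 :=
      (hasDerivAt_const _ _).prodMk (hasDerivAt_id p.2)
    have h1 : HasDerivAt (fun t : ℝ => Phi n θ (p.1, t)) 0 p.2 := by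
      have := HasFDerivAt.comp_hasDerivAt (f := fun t : ℝ => (p.1, t)) p.2 hF c
      simpa [Function.comp_def] using this
    have hE : DifferentiableAt ℝ (fun t : ℝ => Real.exp (-(p.1 ^ 2 + t ^ 2) / 2)) p.2 := by fun_prop
    have h2 := ((((H n).hasDerivAt p.2).const_mul (Real.sin θ)).const_add
      (Real.cos θ * (H n).eval p.1)).mul hE.hasDerivAt
    have := h1.unique h2
    rw [hz, zero_mul, add_zero] at this
    exact (mul_eq_zero.1 this.symm).resolve_right hexp

theorem angle_fin (a b : ℝ) (h : a ≠ 0 ∨ b ≠ 0) :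
    {θ ∈ Set.Ico (0 : ℝ) Real.pi | Real.cos θ * a + Real.sin θ * b = 0}.Finite := by
  apply Set.Subsingleton.finite
  rintro s ⟨⟨hs0, hs1⟩, hs⟩ t ⟨⟨ht0, ht1⟩, ht⟩
  have key : Real.sin (s - t) = 0 := by
    rw [Real.sin_sub]
    rcases h with h | h
    · apply (mul_eq_zero.1 (?_ : _ * a = 0)).resolve_right h
      linear_combination Real.sin s * ht - Real.sin t * hs
    · apply (mul_eq_zero.1 (?_ : _ * b = 0)).resolve_right h
      linear_combination Real.cos t * hs - Real.cos s * ht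
  have := (Real.sin_eq_zero_iff_of_lt_of_lt (by linarith) (by linarith)).1 key
  linarith

open Real Set in
/-- For all but finitely many `θ ∈ [0,π)`, the gradient of `Φ^θ_n` vanishes at no
point of the nodal set `N(Φ^θ_n)` (so that for such `θ` the nodal set is a smooth
`1`-dimensional submanifold of `ℝ²`). -/
theorem nodal_set_regular_for_all_but_finitely_many_theta (n : ℕ) (hn : 1 ≤ n) :
    {θ ∈ Set.Ico (0 : ℝ) π |
      ¬ ∀ p ∈ nodalSet n θ, fderiv ℝ (Phi n θ) p ≠ 0}.Finite := by
  obtain ⟨m, rfl⟩ : ∃ m, n = m + 1 := ⟨n - 1, by omega⟩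
  have hm : (2 * (m + 1) : ℝ) ≠ 0 := by positivity
  have hR : {x : ℝ | (H m).eval x = 0}.Finite := by
    refine (H m).roots.toFinset.finite_toSet.subset ?_
    intro x hx
    simpa [H_ne m] using hx
  have hbig := (hR.prod hR).biUnion (t := fun p => {θ ∈ Set.Ico (0 : ℝ) Real.pi |
      Real.cos θ * (H (m+1)).eval p.1 + Real.sin θ * (H (m+1)).eval p.2 = 0}) (by
    rintro p ⟨hp1, -⟩
    exact angle_fin _ _ (Or.inl fun h => H_common p.1 m hp1 h))
  refine ((hbig.union (angle_fin 1 0 (by simp))).union (angle_fin 0 1 (by simp))).subset ?_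
  rintro θ ⟨hθ, h⟩
  push Not at h
  obtain ⟨p, hp, hf⟩ := h
  have hz : Real.cos θ * (H (m+1)).eval p.1 + Real.sin θ * (H (m+1)).eval p.2 = 0 :=
    (by
      simp only [nodalSet, Phi, Set.mem_setOf_eq] at hp
      exact (mul_eq_zero.1 hp).resolve_right (Real.exp_pos _).ne')
  obtain ⟨h1, h2⟩ := Phi_crit _ _ p hz hf
  by_cases hc : Real.cos θ = 0
  · exact Or.inl (Or.inr ⟨hθ, by simp [hc]⟩)
  by_cases hs : Real.sin θ = 0
  · exact Or.inr ⟨hθ, by simp [hs]⟩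
  refine Or.inl (Or.inl ?_)
  have h1 := (mul_eq_zero.1 h1).resolve_left hc
  have h2 := (mul_eq_zero.1 h2).resolve_left hs
  rw [H_der, Polynomial.eval_mul, Polynomial.eval_C] at h1 h2
  exact mem_biUnion (x := p) ⟨(mul_eq_zero.1 h1).resolve_left hm,
    (mul_eq_zero.1 h2).resolve_left hm⟩ ⟨hθ, hz⟩
end

section
/- Let n ≥ 2 and θ ∈ (0,π) with θ ≠ π/2, and let (x,y) be a critical zero of Φ^θ_n. Then the Hessian matrix of Φ^θ_n at (x,y) is diagonal, equal to exp(−(x²+y²)/2)·diag(cos θ · H_n''(x), sin θ · H_n''(y)), and it is nondegenerate (its determinant is nonzero); in particular the nodal set of Φ^θ_n has a nondegenerate double crossing at (x,y). -/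
/-- A critical zero of `Φ^θ_n` is a point where `Φ^θ_n` and both of its first-order
partial derivatives vanish. -/
noncomputable def IsCriticalZero (n : ℕ) (θ : ℝ) (p : ℝ × ℝ) : Prop :=
  Phi n θ p = 0 ∧
  deriv (fun x => Phi n θ (x, p.2)) p.1 = 0 ∧
  deriv (fun y => Phi n θ (p.1, y)) p.2 = 0

theorem H_aux (n : ℕ) :
    H (n + 1) = Polynomial.C 2 * Polynomial.X * H n - Polynomial.derivative (H n) ∧
    Polynomial.derivative (H (n + 1)) = Polynomial.C (2 * (n + 1) : ℝ) * H n := by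
  induction n with
  | zero => simp [H]
  | succ k ih =>
    obtain ⟨h1, h2⟩ := ih
    have h3 : H (k + 1 + 1) = Polynomial.C 2 * Polynomial.X * H (k + 1)
        - Polynomial.C (2 * (k + 1) : ℝ) * H k := by rw [H]
    refine ⟨by rw [h3, h2], ?_⟩
    rw [h3, Polynomial.derivative_sub, Polynomial.derivative_C_mul, mul_assoc,
      Polynomial.derivative_C_mul, Polynomial.derivative_mul, h2, Polynomial.derivative_X]
    have h4 : Polynomial.derivative (H k)
        = Polynomial.C 2 * Polynomial.X * H k - H (k + 1) := by rw [h1]; ring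
    rw [h4]
    simp only [Polynomial.C_mul, Polynomial.C_add, Nat.cast_add, Nat.cast_one, Polynomial.C_1]
    ring

theorem H_no_common_s6 (n : ℕ) (t : ℝ) (h0 : (H n).eval t = 0) (h1 : (H (n + 1)).eval t = 0) :
    False := by
  induction n with
  | zero => simp [H] at h0
  | succ k ih =>
    refine ih ?_ h0
    rw [H] at h1
    simp only [Polynomial.eval_sub, Polynomial.eval_mul, h0, Polynomial.eval_C] at h1
    have : (2 * ((k : ℝ) + 1)) ≠ 0 := by positivity
    have h5 : (2 * ((k : ℝ) + 1)) * (H k).eval t = 0 := by linarith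
    exact (mul_eq_zero.mp h5).resolve_left this

theorem H_second_ne (n : ℕ) (hn : 2 ≤ n) (t : ℝ)
    (h : (Polynomial.derivative (H n)).eval t = 0) :
    (Polynomial.derivative (Polynomial.derivative (H n))).eval t ≠ 0 := by
  obtain ⟨m, rfl⟩ : ∃ m, n = m + 2 := ⟨n - 2, by omega⟩
  have a := (H_aux (m + 1)).2
  have b := (H_aux m).2
  have ha : (2 * (((m + 1 : ℕ) : ℝ) + 1)) ≠ 0 := by positivity
  have hb : (2 * ((m : ℝ) + 1)) ≠ 0 := by positivity
  change Polynomial.derivative (H (m + 2)) = _ at a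
  rw [a] at h
  rw [a, Polynomial.derivative_C_mul, b]
  simp only [Polynomial.eval_mul, Polynomial.eval_C] at h ⊢
  have h1 := (mul_eq_zero.mp h).resolve_left ha
  intro h2
  have h3 := (mul_eq_zero.mp ((mul_eq_zero.mp h2).resolve_left ha)).resolve_left hb
  exact H_no_common_s6 m t h3 h1

theorem gauss_x (x y : ℝ) : HasDerivAt (fun x' : ℝ => Real.exp (-(x' ^ 2 + y ^ 2) / 2))
    (-x * Real.exp (-(x ^ 2 + y ^ 2) / 2)) x := by
  have h : HasDerivAt (fun x' : ℝ => -(x' ^ 2 + y ^ 2) / 2) (-x) x := by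
    have := ((((hasDerivAt_id x).pow 2).add_const (y ^ 2)).neg).div_const 2
    refine this.congr_deriv ?_
    simp
    ring
  refine h.exp.congr_deriv ?_
  ring

theorem gauss_y (x y : ℝ) : HasDerivAt (fun y' : ℝ => Real.exp (-(x ^ 2 + y' ^ 2) / 2))
    (-y * Real.exp (-(x ^ 2 + y ^ 2) / 2)) y := by
  have h := gauss_x y x
  simp only [add_comm (_ ^ 2) (x ^ 2)] at h
  exact h

theorem Phi_dx (n : ℕ) (θ x y : ℝ) : deriv (fun x' => Phi n θ (x', y)) x =
    (Real.cos θ * (Polynomial.derivative (H n)).eval x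
      - x * (Real.cos θ * (H n).eval x + Real.sin θ * (H n).eval y)) *
      Real.exp (-(x ^ 2 + y ^ 2) / 2) := by
  have h := ((((H n).hasDerivAt x).const_mul (Real.cos θ)).add_const
    (Real.sin θ * (H n).eval y)).mul (gauss_x x y)
  refine (h.congr_deriv ?_).deriv
  ring

theorem Phi_dy (n : ℕ) (θ x y : ℝ) : deriv (fun y' => Phi n θ (x, y')) y =
    (Real.sin θ * (Polynomial.derivative (H n)).eval y
      - y * (Real.cos θ * (H n).eval x + Real.sin θ * (H n).eval y)) *
      Real.exp (-(x ^ 2 + y ^ 2) / 2) := by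
  have h := ((((H n).hasDerivAt y).const_mul (Real.sin θ)).const_add
    (Real.cos θ * (H n).eval x)).mul (gauss_y x y)
  refine (h.congr_deriv ?_).deriv
  ring

open Real Set in
/-- At a critical zero `(x,y)` of `Φ^θ_n` (with `θ ∈ (0,π)`, `θ ≠ π/2`) the Hessian
matrix of `Φ^θ_n` is diagonal, equal to
`e^{-(x²+y²)/2} · diag(cos θ · H_n''(x), sin θ · H_n''(y))`, and nondegenerate. -/
theorem hessian_at_critical_zero (n : ℕ) (hn : 2 ≤ n) (θ : ℝ)
    (hθ : θ ∈ Set.Ioo 0 π) (hθ' : θ ≠ π / 2) (x y : ℝ)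
    (hcz : IsCriticalZero n θ (x, y)) :
    deriv (fun x' => deriv (fun x'' => Phi n θ (x'', y)) x') x =
      Real.exp (-(x ^ 2 + y ^ 2) / 2) *
        (Real.cos θ * (Polynomial.derivative (Polynomial.derivative (H n))).eval x) ∧
    deriv (fun y' => deriv (fun y'' => Phi n θ (x, y'')) y') y =
      Real.exp (-(x ^ 2 + y ^ 2) / 2) *
        (Real.sin θ * (Polynomial.derivative (Polynomial.derivative (H n))).eval y) ∧
    deriv (fun x' => deriv (fun y' => Phi n θ (x', y')) y) x = 0 ∧
    deriv (fun y' => deriv (fun x' => Phi n θ (x', y')) x) y = 0 ∧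
    (deriv (fun x' => deriv (fun x'' => Phi n θ (x'', y)) x') x) *
      (deriv (fun y' => deriv (fun y'' => Phi n θ (x, y'')) y') y) -
      (deriv (fun x' => deriv (fun y' => Phi n θ (x', y')) y) x) *
      (deriv (fun y' => deriv (fun x' => Phi n θ (x', y')) x) y) ≠ 0 := by
  have hs : Real.sin θ ≠ 0 := (Real.sin_pos_of_pos_of_lt_pi hθ.1 hθ.2).ne'
  have hc : Real.cos θ ≠ 0 := by
    intro h
    apply hθ'
    apply Real.injOn_cos ⟨hθ.1.le, hθ.2.le⟩ ⟨by positivity, by linarith [Real.pi_pos]⟩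
    rw [h, Real.cos_pi_div_two]
  obtain ⟨h0, hx, hy⟩ := hcz
  simp only [Phi_dx, Phi_dy] at hx hy
  have hE := Real.exp_ne_zero (-(x ^ 2 + y ^ 2) / 2)
  have h0 : Real.cos θ * (H n).eval x + Real.sin θ * (H n).eval y = 0 :=
    (mul_eq_zero.mp h0).resolve_right hE
  have hx := (mul_eq_zero.mp hx).resolve_right hE
  have hy := (mul_eq_zero.mp hy).resolve_right hE
  rw [h0, mul_zero, sub_zero] at hx hy
  have hx := (mul_eq_zero.mp hx).resolve_left hc
  have hy := (mul_eq_zero.mp hy).resolve_left hs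
  have nx := H_second_ne n hn x hx
  have ny := H_second_ne n hn y hy
  have dxF := (((H n).hasDerivAt x).const_mul (Real.cos θ)).add_const
    (Real.sin θ * (H n).eval y)
  have dyF := (((H n).hasDerivAt y).const_mul (Real.sin θ)).const_add
    (Real.cos θ * (H n).eval x)
  simp only [Phi_dx, Phi_dy]
  have e1 := ((((((Polynomial.derivative (H n)).hasDerivAt x).const_mul (Real.cos θ)).sub
    ((hasDerivAt_id' x).mul dxF)).mul (gauss_x x y)).congr_deriv
      (g' := Real.exp (-(x ^ 2 + y ^ 2) / 2) *
        (Real.cos θ * (Polynomial.derivative (Polynomial.derivative (H n))).eval x)) (by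
      simp only [Pi.sub_apply, Pi.mul_apply, h0, hx]; ring)).deriv
  have e2 := ((((((Polynomial.derivative (H n)).hasDerivAt y).const_mul (Real.sin θ)).sub
    ((hasDerivAt_id' y).mul dyF)).mul (gauss_y x y)).congr_deriv
      (g' := Real.exp (-(x ^ 2 + y ^ 2) / 2) *
        (Real.sin θ * (Polynomial.derivative (Polynomial.derivative (H n))).eval y)) (by
      simp only [Pi.sub_apply, Pi.mul_apply, h0, hy]; ring)).deriv
  have e3 := ((((dxF.const_mul y).const_sub
    (Real.sin θ * (Polynomial.derivative (H n)).eval y)).mul (gauss_x x y)).congr_deriv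
      (g' := 0) (by simp [h0, hx, hy])).deriv
  have e4 := ((((dyF.const_mul x).const_sub
    (Real.cos θ * (Polynomial.derivative (H n)).eval x)).mul (gauss_y x y)).congr_deriv
      (g' := 0) (by simp [h0, hx, hy])).deriv
  refine ⟨e1, e2, e3, e4, ?_⟩
  have key : ∀ a b c d a' b' : ℝ, a = a' → b = b' → c = 0 → d = 0 → a' ≠ 0 → b' ≠ 0 →
      a * b - c * d ≠ 0 := by
    intro a b c d a' b' h1 h2 h3 h4 h5 h6
    rw [h1, h2, h3, h4, mul_zero, sub_zero]
    exact mul_ne_zero h5 h6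
  exact key _ _ _ _ _ _ e1 e2 e3 e4 (mul_ne_zero hE (mul_ne_zero hc nx))
    (mul_ne_zero hE (mul_ne_zero hs ny))
end

section
/- Let n be an odd positive integer and θ ∈ (0,π/4]. For every t ≤ t_{n,1} (the smallest zero of H_n), the function y ↦ Φ^θ_n(t,y) has exactly one zero in the interval [t_{n,n}, ∞), where t_{n,n} is the largest zero of H_n. -/
lemma H_deg_aux (n : ℕ) : ((H n).natDegree ≤ n ∧ (H n).coeff n = 2 ^ n) ∧
    ((H (n+1)).natDegree ≤ n+1 ∧ (H (n+1)).coeff (n+1) = 2 ^ (n+1)) := by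
  induction n with
  | zero =>
    refine ⟨⟨by simp [H], by simp [H]⟩, ⟨?_, by simp [H]⟩⟩
    simp only [H]
    compute_degree
  | succ n ih =>
    obtain ⟨⟨h1, h2⟩, ⟨h3, h4⟩⟩ := ih
    refine ⟨⟨h3, h4⟩, ?_, ?_⟩
    · rw [H]
      refine (Polynomial.natDegree_sub_le _ _).trans (max_le ?_ ?_)
      · refine Polynomial.natDegree_mul_le.trans ?_
        have : (Polynomial.C (2:ℝ) * Polynomial.X).natDegree ≤ 1 := by compute_degree
        omega
      · refine (Polynomial.natDegree_C_mul_le _ _).trans (by omega)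
    · rw [H, Polynomial.coeff_sub, mul_assoc, Polynomial.coeff_C_mul, Polynomial.coeff_X_mul, h4,
        Polynomial.coeff_C_mul, Polynomial.coeff_eq_zero_of_natDegree_lt (by omega : (H n).natDegree < n+1+1)]
      ring

lemma H_natDegree (n : ℕ) : (H n).natDegree = n :=
  le_antisymm (H_deg_aux n).1.1 (Polynomial.le_natDegree_of_ne_zero (by
    rw [(H_deg_aux n).1.2]; positivity))

lemma H_lead_s8 (n : ℕ) : (H n).leadingCoeff = 2 ^ n := by
  rw [Polynomial.leadingCoeff, H_natDegree, (H_deg_aux n).1.2]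

lemma H_eval_prod (n : ℕ) (t : Fin n → ℝ) (htmono : StrictMono t)
    (htzero : ∀ x : ℝ, (H n).eval x = 0 ↔ ∃ i, x = t i) (x : ℝ) :
    (H n).eval x = 2 ^ n * ∏ i, (x - t i) := by
  have h0 : H n ≠ 0 := by
    intro h
    have := H_lead_s8 n
    rw [h, Polynomial.leadingCoeff_zero] at this
    exact (pow_ne_zero n (two_ne_zero : (2:ℝ) ≠ 0)) this.symm
  have hle : (Finset.univ.val.map t) ≤ (H n).roots := by
    rw [Multiset.le_iff_subset (Multiset.Nodup.map htmono.injective Finset.univ.nodup)]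
    intro y hy
    obtain ⟨i, -, rfl⟩ := Multiset.mem_map.1 hy
    exact (Polynomial.mem_roots h0).2 ((htzero _).2 ⟨i, rfl⟩)
  have hcard : (H n).roots.card ≤ n := (Polynomial.card_roots' _).trans (H_natDegree n).le
  have heq := Multiset.eq_of_le_of_card_le hle (by simpa using hcard)
  have hp := Polynomial.C_leadingCoeff_mul_prod_multiset_X_sub_C (p := H n)
    (by rw [← heq, H_natDegree]; simp)
  rw [← heq, H_lead_s8] at hp
  rw [← hp, Polynomial.eval_mul, Polynomial.eval_C, Multiset.map_map]
  congr 1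
  change Polynomial.eval x (∏ i, (Polynomial.X - Polynomial.C (t i))) = _
  rw [Polynomial.eval_prod]
  simp

open Real Set in
/-- **Lemma 3.2 (1).** Let `n` be odd, `θ ∈ (0,π/4]`, and let `t 0 < ⋯ < t (n-1)`
enumerate the `n` zeros of `H_n`. For every `s ≤ t_{n,1}` (the smallest zero), the
function `y ↦ Φ^θ_n(s,y)` has exactly one zero in `[t_{n,n}, ∞)` (where `t_{n,n}` is
the largest zero). -/
theorem barrier_vertical_exactly_one_zero_above (n : ℕ) (hodd : Odd n) (hpos : 0 < n)
    (θ : ℝ) (hθ : θ ∈ Set.Ioc 0 (π / 4))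
    (t : Fin n → ℝ) (htmono : StrictMono t)
    (htzero : ∀ x : ℝ, (H n).eval x = 0 ↔ ∃ i, x = t i)
    (s : ℝ) (hs : s ≤ t ⟨0, hpos⟩) :
    ∃! y : ℝ, y ∈ Set.Ici (t ⟨n - 1, by omega⟩) ∧ Phi n θ (s, y) = 0 := by
  have hprod := H_eval_prod n t htmono htzero
  set b := t ⟨n - 1, by omega⟩ with hb
  have htb : ∀ i, t i ≤ b := fun i => htmono.monotone (by
    rw [Fin.le_def]; have := i.2; simp; omega)
  have hta : ∀ i, s ≤ t i := fun i => hs.trans (htmono.monotone (by rw [Fin.le_def]; simp))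
  have hb0 : (H n).eval b = 0 := (htzero b).2 ⟨_, hb⟩
  have hpos' : ∀ y, b < y → 0 < (H n).eval y := by
    intro y hy
    rw [hprod]
    have : 0 < ∏ i, (y - t i) := Finset.prod_pos fun i _ => by have := htb i; linarith
    positivity
  have hmono : ∀ y z, b ≤ y → y < z → (H n).eval y < (H n).eval z := by
    intro y z hy hyz
    rcases hy.eq_or_lt with rfl | hy
    · rw [hb0]; exact hpos' _ hyz
    · rw [hprod, hprod]
      have : ∏ i, (y - t i) < ∏ i, (z - t i) :=
        Finset.prod_lt_prod (fun i _ => by have := htb i; linarith)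
          (fun i _ => by linarith) ⟨⟨0, hpos⟩, Finset.mem_univ _, by linarith⟩
      have h2 : (0:ℝ) < 2 ^ n := by positivity
      exact mul_lt_mul_of_pos_left this h2
  have hneg : (H n).eval s ≤ 0 := by
    rw [hprod]
    have h1 : ∏ i, (s - t i) = - ∏ i, (t i - s) := by
      have : ∀ i, s - t i = -1 * (t i - s) := fun i => by ring
      simp_rw [this]
      rw [Finset.prod_mul_distrib]
      simp [hodd.neg_one_pow]
    have h2 : 0 ≤ ∏ i, (t i - s) := Finset.prod_nonneg fun i _ => sub_nonneg.2 (hta i)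
    have h3 : (0:ℝ) < 2 ^ n := by positivity
    rw [h1]; nlinarith
  have hpi := Real.pi_pos
  have hsin : 0 < sin θ := Real.sin_pos_of_pos_of_lt_pi hθ.1 (by have := hθ.2; linarith)
  have hcos : 0 < cos θ := Real.cos_pos_of_mem_Ioo ⟨by have := hθ.1; linarith, by have := hθ.2; linarith⟩
  have hiff : ∀ y, Phi n θ (s, y) = 0 ↔ (H n).eval y = -(cos θ * (H n).eval s) / sin θ := by
    intro y
    simp only [Phi, mul_eq_zero, Real.exp_ne_zero, or_false]
    rw [eq_div_iff hsin.ne']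
    constructor <;> intro h <;> linarith
  simp only [hiff]
  set c := -(cos θ * (H n).eval s) / sin θ
  have hc : 0 ≤ c := div_nonneg (by nlinarith) hsin.le
  have htend : Filter.Tendsto (fun x => (H n).eval x) Filter.atTop Filter.atTop :=
    Polynomial.tendsto_atTop_of_leadingCoeff_nonneg _
      (by rw [← Polynomial.natDegree_pos_iff_degree_pos, H_natDegree]; exact hpos)
      (by rw [H_lead_s8]; positivity)
  obtain ⟨z, hz1, hz2⟩ := ((htend.eventually_ge_atTop c).and (Filter.eventually_ge_atTop b)).exists
  obtain ⟨y, hy1, hy2⟩ := intermediate_value_Icc hz2 (H n).continuous.continuousOn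
    (show c ∈ Set.Icc _ _ from ⟨hb0.le.trans hc, hz1⟩)
  refine ⟨y, ⟨hy1.1, hy2⟩, ?_⟩
  rintro w ⟨hw1, hw2⟩
  simp only at hy2
  rcases lt_trichotomy w y with h | h | h
  · have := hmono _ _ hw1 h; linarith
  · exact h
  · have := hmono _ _ hy1.1 h; linarith
end

section
/- Let n be an odd positive integer and θ ∈ (0,π/4]. For each x ≤ t_{n,1}, let y(x) denote the unique zero of the function y ↦ Φ^θ_n(x,y) in the interval [t_{n,n}, ∞). Then the nodal arc so defined is asymptotic to a line: lim_{x → −∞} y(x)/x = −(cot θ)^{1/n}. -/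
open Filter Topology in
lemma H_ratio {α : Type*} {l : Filter α} (f : α → ℝ) (h0 : ∀ᶠ a in l, f a ≠ 0)
    (hinv : Tendsto (fun a => (f a)⁻¹) l (𝓝 0)) (n : ℕ) :
    Tendsto (fun a => (H n).eval (f a) / (f a) ^ n) l (𝓝 (2 ^ n)) ∧
    Tendsto (fun a => (H (n+1)).eval (f a) / (f a) ^ (n+1)) l (𝓝 (2 ^ (n+1))) := by
  induction n with
  | zero =>
    refine ⟨by simpa [H] using tendsto_const_nhds, ?_⟩
    refine Tendsto.congr' ?_ (tendsto_const_nhds (x := (2:ℝ)^(0+1)))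
    filter_upwards [h0] with a ha
    simp [H]
    field_simp
  | succ k ih =>
    refine ⟨ih.2, ?_⟩
    have h := (ih.2.const_mul 2).sub ((ih.1.mul (hinv.pow 2)).const_mul (2 * (k + 1) : ℝ))
    have e : (2:ℝ) * 2 ^ (k+1) - 2 * (k+1) * (2 ^ k * 0 ^ 2) = 2 ^ (k+1+1) := by ring
    rw [e] at h
    refine h.congr' ?_
    filter_upwards [h0] with a ha
    simp [H]
    field_simp
    ring

open Real Set Filter in
/-- **Proposition 3.4 (asymptotics of the nodal arc).** Let `n` be odd, `θ ∈ (0,π/4]`,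
and let `t 0 < ⋯ < t (n-1)` enumerate the zeros of `H_n`. For `x ≤ t_{n,1}` let `y x`
be the unique zero of `y ↦ Φ^θ_n(x,y)` in `[t_{n,n}, ∞)`. Then
`y(x)/x → -(cot θ)^{1/n}` as `x → -∞`. -/
theorem nodal_arc_asymptote (n : ℕ) (hodd : Odd n) (hpos : 0 < n)
    (θ : ℝ) (hθ : θ ∈ Set.Ioc 0 (π / 4))
    (t : Fin n → ℝ) (htmono : StrictMono t)
    (htzero : ∀ x : ℝ, (H n).eval x = 0 ↔ ∃ i, x = t i)
    (y : ℝ → ℝ)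
    (hy : ∀ x : ℝ, x ≤ t ⟨0, hpos⟩ →
      y x ∈ Set.Ici (t ⟨n - 1, by omega⟩) ∧ Phi n θ (x, y x) = 0) :
    Tendsto (fun x => y x / x) atBot
      (nhds (-(Real.cos θ / Real.sin θ) ^ ((1 : ℝ) / (n : ℝ)))) := by
  have hn0 : n ≠ 0 := hpos.ne'
  have hs : 0 < Real.sin θ := Real.sin_pos_of_pos_of_lt_pi hθ.1 (by linarith [hθ.2, Real.pi_pos])
  have hc : 0 < Real.cos θ :=
    Real.cos_pos_of_mem_Ioo ⟨by linarith [hθ.1, Real.pi_pos], by linarith [hθ.2, Real.pi_pos]⟩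
  have hx0 : ∀ᶠ x : ℝ in atBot, x < 0 := eventually_lt_atBot 0
  have hx : Tendsto (fun x : ℝ => (H n).eval x / x ^ n) atBot (nhds (2 ^ n)) :=
    (H_ratio (fun x : ℝ => x) (hx0.mono fun x h => h.ne) tendsto_inv_atBot_zero n).1
  have hle : ∀ᶠ x : ℝ in atBot, x ≤ t ⟨0, hpos⟩ := eventually_le_atBot _
  have hrel : ∀ᶠ x : ℝ in atBot,
      (H n).eval (y x) = -(Real.cos θ / Real.sin θ) * (H n).eval x := by
    filter_upwards [hle] with x h
    have := (hy x h).2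
    simp only [Phi, mul_eq_zero, Real.exp_ne_zero, or_false] at this
    field_simp
    linarith
  have hcot : 0 < Real.cos θ / Real.sin θ := div_pos hc hs
  have habs : Tendsto (fun x : ℝ => |(H n).eval x|) atBot atTop := by
    have h1 : Tendsto (fun x : ℝ => |x| ^ n) atBot atTop :=
      (tendsto_pow_atTop hn0).comp tendsto_abs_atBot_atTop
    have h2 := hx.abs.pos_mul_atTop (by positivity) h1
    refine h2.congr' ?_
    filter_upwards [hx0] with x h
    rw [← abs_pow, ← abs_mul, div_mul_cancel₀ _ (pow_ne_zero _ h.ne)]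
  have hytop : Tendsto y atBot atTop := by
    rw [tendsto_atTop]
    intro M
    obtain ⟨C, hC⟩ := (isCompact_Icc (a := t ⟨n - 1, by omega⟩) (b := M)).exists_bound_of_continuousOn
      (f := fun u => (H n).eval u) (H n).continuous.continuousOn
    filter_upwards [hle, hrel, (habs.const_mul_atTop hcot).eventually_gt_atTop C] with x h1 h2 h3
    by_contra! h4
    have := hC (y x) ⟨(hy x h1).1, h4.le⟩
    rw [h2, Real.norm_eq_abs, abs_mul, abs_neg, abs_of_pos hcot] at this
    linarith
  have hy0 := hytop.eventually_gt_atTop 0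
  have hyr : Tendsto (fun x : ℝ => (H n).eval (y x) / (y x) ^ n) atBot (nhds (2 ^ n)) :=
    (H_ratio y (hy0.mono fun x h => h.ne') (tendsto_inv_atTop_zero.comp hytop) n).1
  have h2n : (2:ℝ) ^ n ≠ 0 := by positivity
  have hq : Tendsto (fun x => (-(y x / x)) ^ n) atBot (nhds (Real.cos θ / Real.sin θ)) := by
    have h := (hx.div hyr h2n).const_mul (Real.cos θ / Real.sin θ)
    rw [div_self h2n, mul_one] at h
    refine h.congr' ?_
    filter_upwards [hx0, hy0, hrel, hx.eventually_ne h2n] with x h1 h2 h3 h4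
    have hne : (H n).eval x ≠ 0 := by
      intro h; simp [h] at h4
    simp only [Pi.div_apply, h3]
    rw [hodd.neg_pow, div_pow]
    have := h1.ne
    have := h2.ne'
    field_simp
  have hr := (hq.rpow_const (p := (1:ℝ) / n) (Or.inl hcot.ne')).neg
  refine hr.congr' ?_
  filter_upwards [hx0, hy0] with x h1 h2
  have : 0 ≤ -(y x / x) := by
    have := div_neg_of_pos_of_neg h2 h1
    linarith
  rw [one_div, Real.pow_rpow_inv_natCast this hn0, neg_neg]
end
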